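/- arXiv:1308.1804 — 5 statements merged into one kernel-verified Lean document; each statement's English description precedes it below -/
import Mathlib

section
/- Let G be a Grothendieck category with a classical tilting object T such that Ext^{n+1}_G(T,−) ≡ 0 for some n ≥ 0. If X ∈ D(G) satisfies Hom_{D(G)}(Σ^i T, X) = 0 for all i > 0, then the cohomology objects of X satisfy H^i(X) = 0 for all i < −n. -/
/-!
Statement 6: Let `G` be a Grothendieck category with a classical tilting object `T` such that
`Ext^{n+1}_G(T,-) ≡ 0`.  If `X ∈ D(G)` satisfies `Hom(Σ^i T, X) = 0` for all `i > 0`, then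
`H^i(X) = 0` for all `i < -n`.
-/

universe w w' v u

open CategoryTheory Category Limits Pretriangulated

namespace PaperStmt

structure TriangleEquivalenceData (D₁ : Type u) (D₂ : Type w)
    [Category.{v} D₁] [Category.{w'} D₂]
    [HasZeroObject D₁] [HasZeroObject D₂] [Preadditive D₁] [Preadditive D₂]
    [HasShift D₁ ℤ] [HasShift D₂ ℤ]
    [∀ n : ℤ, (shiftFunctor D₁ n).Additive] [∀ n : ℤ, (shiftFunctor D₂ n).Additive]
    [Pretriangulated D₁] [Pretriangulated D₂] where
  functor : D₁ ⥤ D₂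
  commShift : functor.CommShift ℤ
  isTriangulated : letI := commShift; functor.IsTriangulated
  isEquivalence : functor.IsEquivalence

variable (G : Type u) [Category.{v} G] [Abelian G] [HasDerivedCategory.{w} G]

/-- `T` is a (classical) tilting object of `G`. -/
def IsTiltingObject (Tt : G) : Prop :=
  ∃ (R : Type v) (_ : Ring R),
    letI : HasDerivedCategory (ModuleCat.{v} R) := HasDerivedCategory.standard _
    ∃ E : TriangleEquivalenceData (DerivedCategory G) (DerivedCategory (ModuleCat.{v} R)),
      Nonempty (E.functor.obj ((DerivedCategory.singleFunctor G 0).obj Tt)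
        ≅ (DerivedCategory.singleFunctor (ModuleCat.{v} R) 0).obj (ModuleCat.of R R))

end PaperStmt

open PaperStmt DerivedCategory

/-!
Let `F : D(G) ⥤ D(R)` be the equivalence. Since `R` is a separator, `H^j (F Y) = 0` as soon as
`Hom(T⟦-j⟧, Y) = 0`. Hence `F X` lies in degrees `≥ 0`, and for every object `A` of `G` and every
`i < -n` the vanishing of `Ext^m(T, A)` for `m > n` puts `F (A⟦-i⟧)` in degrees `< 0`. By the
t-structure axioms `Hom(A⟦-i⟧, X) = 0` for all `A`, and taking for `A` the cycles of a complex
representing `X` gives `H^i X = 0`.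

That `Ext^{n+1}(T, -) = 0` forces the higher `Ext` groups to vanish requires no injective objects:
in any abelian category a class in `Ext^{m+1}(T, A)` is killed by a monomorphism `A ⟶ B`, so it
comes from `Ext^m(T, B/A)`.
-/

section Homology

variable {C : Type u} [Category.{v} C] [Abelian C] [HasDerivedCategory.{w} C]

lemma homologyMap_eq_zero_of_Q_map_eq_zero {K L : CochainComplex C ℤ} {φ : K ⟶ L}
    (hφ : Q.map φ = 0) (i : ℤ) : HomologicalComplex.homologyMap φ i = 0 := by
  have hnat := homologyFunctorFactors_hom_naturality φ i
  rw [hφ, Functor.map_zero, zero_comp] at hnat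
  exact (cancel_epi ((homologyFunctorFactors C i).hom.app K)).1 (hnat.symm.trans comp_zero.symm)

lemma comp_homologyπ_eq_zero {K : CochainComplex C ℤ} {i : ℤ} {A : C} (g : A ⟶ K.cycles i)
    (h : ∀ f : (singleFunctor C i).obj A ⟶ Q.obj K, f = 0) : g ≫ K.homologyπ i = 0 := by
  let φ : (HomologicalComplex.single C (ComplexShape.up ℤ) i).obj A ⟶ K :=
    HomologicalComplex.mkHomFromSingle (g ≫ K.iCycles i) (by intro k _; simp)
  have hφ : (HomologicalComplex.singleObjCyclesSelfIso (ComplexShape.up ℤ) i A).inv ≫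
      HomologicalComplex.cyclesMap φ i = g := by
    simp [← cancel_mono (K.iCycles i), φ]
  rw [← hφ, Category.assoc, ← HomologicalComplex.homologyπ_naturality,
    homologyMap_eq_zero_of_Q_map_eq_zero (φ := φ) (h (Q.map φ)), comp_zero, comp_zero]

lemma isZero_homology_of_isSeparating {P : ObjectProperty C} (hP : P.IsSeparating)
    {Z : DerivedCategory C} {i : ℤ}
    (h : ∀ A, P A → ∀ f : ((singleFunctor C 0).obj A)⟦-i⟧ ⟶ Z, f = 0) :
    IsZero ((homologyFunctor C i).obj Z) := by
  let K := Q.objPreimage Z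
  let e : Q.obj K ≅ Z := Q.objObjPreimageIso Z
  have hπ : K.homologyπ i = 0 := hP _ _ fun A hA g ↦ by
    rw [comp_zero]
    refine comp_homologyπ_eq_zero g fun f ↦ ?_
    let e' := ((singleFunctors C).shiftIso (-i) i 0 (by simp)).app A
    rw [← cancel_epi e'.hom, ← cancel_mono e.hom]
    simpa using h A hA (e'.hom ≫ f ≫ e.hom)
  have hK : IsZero (K.homology i) := IsZero.of_epi_eq_zero _ hπ
  exact hK.of_iso ((homologyFunctor C i).mapIso e.symm ≪≫ (homologyFunctorFactors C i).app K)

end Homology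

section ShiftedHom

variable {D D' : Type*} [Category D] [Category D'] [HasZeroMorphisms D] [HasZeroMorphisms D']
  [HasShift D ℤ] [HasShift D' ℤ]

lemma shift_hom_shift_eq_zero {T A : D} {p q k : ℤ} (hk : p + k = q)
    (h : ∀ f : T ⟶ A⟦k⟧, f = 0) (f : T⟦p⟧ ⟶ A⟦q⟧) : f = 0 := by
  let e : A⟦q⟧ ≅ A⟦k⟧⟦p⟧ := (shiftFunctorAdd' D k p q (by lia)).app A
  obtain ⟨g, hg⟩ := (shiftFunctor D p).map_surjective (f ≫ e.hom)
  rw [← cancel_mono e.hom, ← hg, h g, Functor.map_zero, zero_comp]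

lemma shift_hom_obj_eq_zero_of_full (F : D ⥤ D') [F.CommShift ℤ] [F.Full] {T X : D} {S : D'}
    (e : F.obj T ≅ S) {i : ℤ} (h : ∀ f : T⟦i⟧ ⟶ X, f = 0) (f : S⟦i⟧ ⟶ F.obj X) : f = 0 := by
  let e' : F.obj (T⟦i⟧) ≅ S⟦i⟧ := (F.commShiftIso i).app T ≪≫ (shiftFunctor D' i).mapIso e
  obtain ⟨g, hg⟩ := F.map_surjective (e'.hom ≫ f)
  rw [← cancel_epi e'.hom, ← hg, h g, Functor.map_zero, comp_zero]

end ShiftedHom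

lemma mono_f_of_mono_homologyMap {C ι : Type*} [Category C] [HasZeroMorphisms C]
    {c : ComplexShape ι} {K L : HomologicalComplex C c} (s : K ⟶ L) {i j k : ι}
    [K.HasHomology j] [L.HasHomology j] [Mono (HomologicalComplex.homologyMap s j)]
    (hij : c.prev j = i) (hjk : c.next j = k) (hto : K.d i j = 0) (hfrom : K.d j k = 0) :
    Mono (s.f j) := by
  have := K.isIso_iCycles j k hjk hfrom
  have := K.isIso_homologyπ i j hij hto
  have : Mono (HomologicalComplex.cyclesMap s j) :=
    mono_of_mono_fac (HomologicalComplex.homologyπ_naturality s j).symm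
  have hs : s.f j = inv (K.iCycles j) ≫ HomologicalComplex.cyclesMap s j ≫ L.iCycles j := by
    simp
  rw [hs]
  infer_instance

section Effaceability

variable {C : Type u} [Category.{v} C] [Abelian C]

lemma exists_mono_comp_Q_map_single_map_eq_zero [HasDerivedCategory.{w} C]
    {K : CochainComplex C ℤ} {A : C} {a : ℤ} [K.IsStrictlyGE (a + 1)]
    (f : Q.obj K ⟶ Q.obj ((HomologicalComplex.single C (ComplexShape.up ℤ) a).obj A)) :
    ∃ (B : C) (j : A ⟶ B), Mono j ∧
      f ≫ Q.map ((HomologicalComplex.single C (ComplexShape.up ℤ) a).map j) = 0 := by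
  obtain ⟨L, _, g, s, _, rfl⟩ := left_fac_of_isStrictlyGE f a
  have := (isIso_Q_map_iff_quasiIso C s).1 inferInstance
  have : Mono (s.f a) := mono_f_of_mono_homologyMap s rfl rfl (by simp) (by simp)
  -- `π` kills `g` for degree reasons, while `s ≫ π` is the monomorphism `s.f a : A ⟶ L.X a`.
  let π : L ⟶ (HomologicalComplex.single C (ComplexShape.up ℤ) a).obj (L.X a) :=
    HomologicalComplex.mkHomToSingle (𝟙 _) fun i hi ↦
      (L.isZero_of_isStrictlyGE a i (by have : i + 1 = a := hi; lia)).eq_of_src _ _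
  let j : A ⟶ L.X a := (HomologicalComplex.singleObjXSelf (ComplexShape.up ℤ) a A).inv ≫ s.f a
  have hg : g ≫ π = 0 := HomologicalComplex.to_single_hom_ext
    ((K.isZero_of_isStrictlyGE (a + 1) a (by lia)).eq_of_src _ _)
  have hj : (HomologicalComplex.single C (ComplexShape.up ℤ) a).map j = s ≫ π :=
    HomologicalComplex.to_single_hom_ext
      (by simp [π, j, HomologicalComplex.single_map_f_self, -Functor.map_comp])
  refine ⟨L.X a, j, inferInstance, ?_⟩
  rw [hj, Q.map_comp, Category.assoc, IsIso.inv_hom_id_assoc, ← Q.map_comp, hg, Functor.map_zero]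

lemma exists_mono_comp_singleFunctor_map_eq_zero [HasDerivedCategory.{w} C]
    {X : DerivedCategory C} {A : C} {a : ℤ} [X.IsGE (a + 1)]
    (f : X ⟶ (singleFunctor C a).obj A) :
    ∃ (B : C) (j : A ⟶ B), Mono j ∧ f ≫ (singleFunctor C a).map j = 0 := by
  obtain ⟨K, _, ⟨e⟩⟩ := X.exists_iso_Q_obj_of_isGE (a + 1)
  obtain ⟨B, j, hj, hf⟩ := exists_mono_comp_Q_map_single_map_eq_zero (e.inv ≫ f)
  refine ⟨B, j, hj, ?_⟩
  rw [← cancel_epi e.inv, comp_zero, ← Category.assoc]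
  exact hf

lemma exists_mono_comp_mk₀_eq_zero [HasExt.{w'} C] {T A : C} {m : ℕ}
    (x : Abelian.Ext.{w'} T A (m + 1)) :
    ∃ (B : C) (j : A ⟶ B), Mono j ∧ x.comp (Abelian.Ext.mk₀ j) (add_zero _) = 0 := by
  let := HasDerivedCategory.standard C
  let e := (singleFunctors C).shiftIso ((m + 1 : ℕ) : ℤ) (-(m + 1 : ℕ)) 0 (by simp)
  have : ((singleFunctor C 0).obj T).IsGE (-(m + 1 : ℕ) + 1) :=
    TStructure.t.isGE_of_ge _ _ 0 (by lia)
  obtain ⟨B, j, hj, hx⟩ := exists_mono_comp_singleFunctor_map_eq_zero (x.hom ≫ e.hom.app A)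
  refine ⟨B, j, hj, ?_⟩
  ext
  rw [Abelian.Ext.comp_hom, Abelian.Ext.mk₀_hom, ShiftedHom.comp_mk₀, Abelian.Ext.zero_hom,
    ← cancel_mono (e.hom.app B), zero_comp, ← hx, Category.assoc, Category.assoc]
  congr 1
  exact e.hom.naturality j

lemma subsingleton_ext_succ [HasExt.{w'} C] {T : C} {m : ℕ}
    (h : ∀ A : C, Subsingleton (Abelian.Ext.{w'} T A m)) (A : C) :
    Subsingleton (Abelian.Ext.{w'} T A (m + 1)) := by
  refine subsingleton_of_forall_eq 0 fun x ↦ ?_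
  obtain ⟨B, j, _, hx⟩ := exists_mono_comp_mk₀_eq_zero x
  have hS : (ShortComplex.mk j (cokernel.π j) (cokernel.condition j)).ShortExact :=
    { exact := ShortComplex.exact_cokernel j }
  obtain ⟨y, rfl⟩ := Abelian.Ext.covariant_sequence_exact₁ T hS x hx rfl
  rw [(h _).elim y 0, Abelian.Ext.zero_comp]

lemma hasProjectiveDimensionLT_of_subsingleton_ext [HasExt.{w'} C] {T : C} {m : ℕ}
    (h : ∀ A : C, Subsingleton (Abelian.Ext.{w'} T A m)) : HasProjectiveDimensionLT T m :=
  .mk fun i hi ↦ by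
    induction i, hi using Nat.le_induction with
    | base => exact fun A x ↦ (h A).elim x 0
    | succ i _ ih =>
      have := subsingleton_ext_succ fun A ↦ subsingleton_of_forall_eq 0 (@ih A)
      exact fun A x ↦ (this A).elim x 0

lemma hom_shift_eq_zero_of_hasProjectiveDimensionLT [HasDerivedCategory.{w} C] {T : C} {m : ℕ}
    [HasProjectiveDimensionLT T m] {k : ℤ} (hk : m ≤ k) {A : C}
    (f : (singleFunctor C 0).obj T ⟶ ((singleFunctor C 0).obj A)⟦k⟧) : f = 0 := by
  lift k to ℕ using by lia
  let := HasExt.standard C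
  have := HasProjectiveDimensionLT.subsingleton T m k (by lia) A
  exact (Abelian.Ext.homEquiv (X := T) (Y := A) (n := k)).symm.subsingleton.elim f 0

end Effaceability

section FullyFaithful

variable {C : Type*} [Category C] [Abelian C] [HasDerivedCategory C]
  {D : Type*} [Category D] [Abelian D] [HasDerivedCategory D]

lemma isGE_of_fullyFaithful (F : DerivedCategory C ⥤ DerivedCategory D) [F.CommShift ℤ] [F.Full]
    [F.Faithful] {T : DerivedCategory C} {S : D} (hS : IsSeparator S)
    (e : F.obj T ≅ (singleFunctor D 0).obj S) {n : ℤ}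
    (hT : ∀ (A : C) (k : ℤ), n < k → ∀ f : T ⟶ ((singleFunctor C 0).obj A)⟦k⟧, f = 0)
    {X : DerivedCategory C} (hX : ∀ i : ℤ, 0 < i → ∀ f : T⟦i⟧ ⟶ X, f = 0) : X.IsGE (-n) := by
  have isZero_homology_obj {Y : DerivedCategory C} {j : ℤ} (hY : ∀ f : T⟦-j⟧ ⟶ Y, f = 0) :
      IsZero ((homologyFunctor D j).obj (F.obj Y)) := by
    refine isZero_homology_of_isSeparating hS ?_
    rintro _ ⟨⟩
    exact shift_hom_obj_eq_zero_of_full F e hY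
  have hFX : (F.obj X).IsGE 0 :=
    (isGE_iff _ _).2 fun i hi ↦ isZero_homology_obj (hX (-i) (by lia))
  refine (isGE_iff _ _).2 fun i hi ↦ ?_
  have isSeparating_top : (⊤ : ObjectProperty C).IsSeparating :=
    fun M _ _ _ h ↦ by simpa using h M trivial (𝟙 M)
  refine isZero_homology_of_isSeparating isSeparating_top fun A _ f ↦ ?_
  have hFA : (F.obj (((singleFunctor C 0).obj A)⟦-i⟧)).IsLE (-1) :=
    (isLE_iff _ _).2 fun j hj ↦ isZero_homology_obj
      (shift_hom_shift_eq_zero (k := j - i) (by lia) (hT A _ (by lia)))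
  apply F.map_injective
  rw [F.map_zero]
  exact TStructure.t.zero_of_isLE_of_isGE _ (-1) 0 (by lia) hFA hFX

end FullyFaithful

theorem statement6_general (G : Type u) [Category.{v} G] [Abelian G]
    [HasDerivedCategory.{w} G] [HasExt.{w'} G]
    (T : G) (hT : IsTiltingObject G T) (n : ℕ)
    (hext : ∀ A : G, Subsingleton (Abelian.Ext.{w'} T A (n + 1)))
    (X : DerivedCategory G)
    (hX : ∀ i : ℤ, 0 < i → ∀ f : (((singleFunctor G 0).obj T)⟦i⟧ ⟶ X), f = 0) :
    ∀ i : ℤ, i < -(n : ℤ) → IsZero ((homologyFunctor G i).obj X) := by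
  obtain ⟨R, _, E, ⟨e⟩⟩ := hT
  let : HasDerivedCategory (ModuleCat.{v} R) := HasDerivedCategory.standard _
  let := E.commShift
  have := E.isEquivalence
  have := hasProjectiveDimensionLT_of_subsingleton_ext hext
  let eR := e ≪≫ (singleFunctor _ 0).mapIso (Shrink.linearEquiv.{v} R R).symm.toModuleIso
  exact (isGE_iff X _).1 <| isGE_of_fullyFaithful E.functor (ModuleCat.isSeparator R) eR
    (fun A k hk ↦ hom_shift_eq_zero_of_hasProjectiveDimensionLT (m := n + 1) (by lia)) hX

theorem statement6 (G : Type u) [Category.{v} G] [Abelian G]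
    [HasFilteredColimits G] [AB5 G] [HasSeparator G]
    [HasDerivedCategory.{w} G] [HasExt.{w} G]
    (T : G) (hT : IsTiltingObject G T) (n : ℕ)
    (hext : ∀ X : G, Subsingleton (Abelian.Ext T X (n + 1)))
    (X : DerivedCategory G)
    (hX : ∀ i : ℤ, 0 < i → ∀ f : (((singleFunctor G 0).obj T)⟦i⟧ ⟶ X), f = 0) :
    ∀ i : ℤ, i < -(n : ℤ) → IsZero ((homologyFunctor G i).obj X) :=
  statement6_general G T hT n hext X hX
end

section
/- Let R be a ring, C a big cotilting right R-module with cotilting class X_C, and let F_0 = {F ∈ Mod-R : Ext^1_R(X,F) = 0 for all X ∈ X_C}. If Z is a cochain complex of R-modules all of whose components belong to X_C, and X is an acyclic cochain complex of R-modules all of whose cocycle modules belong to F_0, then every chain map Z → X is null-homotopic, i.e., Hom_{K(R)}(Z, X) = 0 in the homotopy category of complexes. -/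
/-!
Statement 10: Let `R` be a ring, `C` a big cotilting module with cotilting class `X_C`, and
`F₀` its right `Ext¹`-orthogonal.  If `Z` is a complex with components in `X_C` and `X` is an
acyclic complex whose cocycles lie in `F₀`, then every chain map `Z ⟶ X` is null-homotopic.
-/

universe e w v u

open CategoryTheory Category Limits

namespace PaperStmt

variable {R : Type v} [Ring R]

/-- `M` belongs to `Prod C`: it is a direct summand of a product of copies of `C`. -/
def InProdOf (C M : ModuleCat.{v} R) : Prop :=
  ∃ (ι : Type v) (s : M ⟶ ∏ᶜ (fun _ : ι => C)) (r : (∏ᶜ (fun _ : ι => C)) ⟶ M),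
    s ≫ r = 𝟙 M

/-- `C` has injective dimension at most `n`. -/
def InjDimLE (C : ModuleCat.{v} R) (n : ℕ) : Prop :=
  ∃ S : ComposableArrows (ModuleCat.{v} R) (n + 3),
    S.Exact ∧ IsZero (S.obj 0) ∧ IsZero (S.obj (Fin.last (n + 3))) ∧
    Nonempty (S.obj ⟨1, by omega⟩ ≅ C) ∧
    ∀ (i : ℕ) (_ : 2 ≤ i) (_ : i ≤ n + 2), Injective (S.obj ⟨i, by omega⟩)

/-- `C` is a big `n`-cotilting module. -/
def IsBigNCotilting [HasExt.{e} (ModuleCat.{v} R)] (n : ℕ) (C : ModuleCat.{v} R) : Prop :=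
  InjDimLE C n ∧
  (∀ (ι : Type v) (j : ℕ), 0 < j →
      Subsingleton (Abelian.Ext (∏ᶜ (fun _ : ι => C)) C j)) ∧
  (∃ (r : ℕ) (S : ComposableArrows (ModuleCat.{v} R) (r + 3)),
    S.Exact ∧ IsZero (S.obj 0) ∧ IsZero (S.obj (Fin.last (r + 3))) ∧
    (∀ (i : ℕ) (_ : 1 ≤ i) (_ : i ≤ r + 1), InProdOf C (S.obj ⟨i, by omega⟩)) ∧
    Injective (S.obj ⟨r + 2, by omega⟩) ∧ IsCoseparator (S.obj ⟨r + 2, by omega⟩))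

/-- `C` is a big cotilting module. -/
def IsBigCotilting [HasExt.{e} (ModuleCat.{v} R)] (C : ModuleCat.{v} R) : Prop :=
  ∃ n : ℕ, IsBigNCotilting n C

/-- Membership in the cotilting class `X_C = {M : Ext^i(M, C) = 0 for all i > 0}`. -/
def InCotiltingClass [HasExt.{e} (ModuleCat.{v} R)] (C M : ModuleCat.{v} R) : Prop :=
  ∀ i : ℕ, 0 < i → Subsingleton (Abelian.Ext M C i)

/-- Membership in `F₀ = {F : Ext¹(X, F) = 0 for all X ∈ X_C}`. -/
def InF0 [HasExt.{e} (ModuleCat.{v} R)] (C F : ModuleCat.{v} R) : Prop :=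
  ∀ M : ModuleCat.{v} R, InCotiltingClass C M → Subsingleton (Abelian.Ext M F 1)

end PaperStmt

open PaperStmt

/-!
Dimension shifting along projective resolutions shows that an object `F` of `F₀` is right
orthogonal to `X_C` for all positive `Ext` groups and that its injective dimension is at most that
of `C`. So it suffices to prove: if `X` is acyclic, its cocycles have injective dimension at most
`n`, and the positive `Ext` groups from the terms of `Z` to these cocycles vanish, then the complex
`Hom(Z, X)` is acyclic. This goes by induction on `n`. If the cocycles are injective, then `X` is
contractible. Otherwise embed `X` in a contractible complex `I` with injective terms. The
cocycles of `I ⧸ X` are the cokernels of those of `X` in the injective cocycles of `I`, so the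
injective dimension has dropped by one. Since `Ext¹` from the terms of `Z` to those of `X` vanishes,
`0 → Hom(Z, X) → Hom(Z, I) → Hom(Z, I ⧸ X) → 0` is exact, and its last two terms are acyclic.
-/

section ExtVanishing

open Abelian

variable {𝓐 : Type u} [Category.{v} 𝓐] [Abelian 𝓐] [HasExt.{e} 𝓐] {S : ShortComplex 𝓐}

lemma subsingleton_ext_X₂ (hS : S.ShortExact) (M : 𝓐) (n : ℕ)
    (h₁ : Subsingleton (Ext M S.X₁ n)) (h₃ : Subsingleton (Ext M S.X₃ n)) :
    Subsingleton (Ext M S.X₂ n) := by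
  refine subsingleton_of_forall_eq 0 fun x ↦ ?_
  obtain ⟨y, rfl⟩ := Ext.covariant_sequence_exact₂ M hS x (Subsingleton.elim _ _)
  rw [Subsingleton.elim y 0, Ext.zero_comp]

lemma subsingleton_ext_X₃_of_injective_X₂ (hS : S.ShortExact) [Injective S.X₂] (M : 𝓐) (n : ℕ)
    (h : Subsingleton (Ext M S.X₁ (n + 2))) : Subsingleton (Ext M S.X₃ (n + 1)) := by
  refine subsingleton_of_forall_eq 0 fun x ↦ ?_
  obtain ⟨y, rfl⟩ := Ext.covariant_sequence_exact₃ M hS x rfl (Subsingleton.elim _ _)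
  rw [(Ext.subsingleton_of_injective M S.X₂ n).elim y 0, Ext.zero_comp]

lemma subsingleton_ext_X₁_iff_of_projective_X₂ (hS : S.ShortExact) [Projective S.X₂] (Y : 𝓐)
    (n : ℕ) : Subsingleton (Ext S.X₁ Y (n + 1)) ↔ Subsingleton (Ext S.X₃ Y (n + 2)) := by
  have hP (k : ℕ) := Ext.subsingleton_of_projective S.X₂ Y k
  constructor <;> intro h <;> refine subsingleton_of_forall_eq 0 fun x ↦ ?_
  · obtain ⟨y, rfl⟩ :=
      Ext.contravariant_sequence_exact₃ hS Y x ((hP _).elim _ _) (add_comm 1 (n + 1))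
    rw [Subsingleton.elim y 0, Ext.comp_zero]
  · obtain ⟨y, rfl⟩ :=
      Ext.contravariant_sequence_exact₁ hS Y x (add_comm 1 (n + 1)) (Subsingleton.elim _ _)
    rw [(hP n).elim y 0, Ext.comp_zero]

lemma exists_comp_g_eq_of_subsingleton_ext (hS : S.ShortExact) {M : 𝓐}
    (h : Subsingleton (Ext M S.X₁ 1)) (b : M ⟶ S.X₃) : ∃ a : M ⟶ S.X₂, a ≫ S.g = b := by
  obtain ⟨y, hy⟩ := Ext.covariant_sequence_exact₃ M hS (Ext.mk₀ b) (zero_add 1)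
    (Subsingleton.elim _ _)
  obtain ⟨a, rfl⟩ := (Ext.mk₀_bijective M S.X₂).2 y
  exact ⟨a, (Ext.mk₀_bijective M S.X₃).1 (by rw [← Ext.mk₀_comp_mk₀, hy])⟩

/-- `M` belongs to the left orthogonal class of `C` for all positive `Ext` groups. For a cotilting
module `C` this is the cotilting class `X_C`. -/
def IsExtLeftOrthogonal (C M : 𝓐) : Prop :=
  ∀ i : ℕ, 0 < i → Subsingleton (Ext M C i)

/-- `F` belongs to the right `Ext¹`-orthogonal of the class of objects `M` satisfying
`IsExtLeftOrthogonal C M`. For a cotilting module `C` this is the class `F₀`. -/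
def IsExtBiorthogonal (C F : 𝓐) : Prop :=
  ∀ M : 𝓐, IsExtLeftOrthogonal C M → Subsingleton (Ext M F 1)

namespace IsExtBiorthogonal

variable [EnoughProjectives 𝓐] {C F : 𝓐}

lemma subsingleton_ext_of_lt (hF : IsExtBiorthogonal C F) (n : ℕ) (M : 𝓐)
    (hM : ∀ i, n < i → Subsingleton (Ext M C i)) : Subsingleton (Ext M F (n + 1)) := by
  induction n generalizing M with
  | zero => exact hF M hM
  | succ n ih =>
    let S := ShortComplex.mk (kernel.ι (Projective.π M)) (Projective.π M) (kernel.condition _)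
    have hS : S.ShortExact := { exact := ShortComplex.exact_kernel _ }
    have : Projective S.X₂ := inferInstanceAs (Projective (Projective.over M))
    refine (subsingleton_ext_X₁_iff_of_projective_X₂ hS F n).1 (ih S.X₁ fun i hi ↦ ?_)
    obtain ⟨i, rfl⟩ := Nat.exists_eq_add_one_of_ne_zero (Nat.ne_zero_of_lt hi)
    exact (subsingleton_ext_X₁_iff_of_projective_X₂ hS C i).2 (hM (i + 2) (by lia))

lemma subsingleton_ext (hF : IsExtBiorthogonal C F) {M : 𝓐} (hM : IsExtLeftOrthogonal C M)
    (n : ℕ) : Subsingleton (Ext M F (n + 1)) :=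
  hF.subsingleton_ext_of_lt n M fun i hi ↦ hM i (Nat.zero_lt_of_lt hi)

lemma hasInjectiveDimensionLE (hF : IsExtBiorthogonal C F) (n : ℕ) [HasInjectiveDimensionLE C n] :
    HasInjectiveDimensionLE F n :=
  hasInjectiveDimensionLT_of_enoughProjectives F (n + 1) fun M ↦
    hF.subsingleton_ext_of_lt n M fun i hi ↦
      HasInjectiveDimensionLT.subsingleton C (n + 1) i hi M

end IsExtBiorthogonal

end ExtVanishing

section InjectiveDimension

variable {𝓐 : Type u} [Category.{v} 𝓐] [Abelian 𝓐]

/-- The short complex `ker f ⟶ X₁ ⟶ ker g` attached to a short complex `X₁ ⟶ X₂ ⟶ X₃` with maps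
`f` and `g`. It serves to split a long exact sequence into short ones. -/
noncomputable abbrev kernelsShortComplex (S : ShortComplex 𝓐) : ShortComplex 𝓐 :=
  ShortComplex.mk (kernel.ι S.f) (kernel.lift S.g S.f S.zero)
    (by simp [← cancel_mono (kernel.ι S.g)])

lemma kernelsShortComplex_shortExact {S : ShortComplex 𝓐} (hS : S.Exact) :
    (kernelsShortComplex S).ShortExact where
  exact := by
    let φ : kernelsShortComplex S ⟶ ShortComplex.mk (kernel.ι S.f) S.f (kernel.condition _) :=
      { τ₁ := 𝟙 _, τ₂ := 𝟙 _, τ₃ := kernel.ι S.g }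
    rw [ShortComplex.exact_iff_of_epi_of_isIso_of_mono φ]
    exact ShortComplex.exact_kernel _
  epi_g := hS.epi_kernelLift

lemma hasInjectiveDimensionLE_kernel_of_exact {m : ℕ} {S : ComposableArrows 𝓐 m} (hS : S.Exact)
    (hlast : IsZero (S.obj (Fin.last m))) (k i : ℕ) (hm : i + k + 1 = m)
    (hI : ∀ j (_ : i ≤ j) (_ : j < m), Injective (S.obj ⟨j, by lia⟩)) :
    HasInjectiveDimensionLE (kernel (S.map' i (i + 1))) k := by
  induction k generalizing i with
  | zero =>
    subst hm
    have : Injective (S.obj ⟨i, by lia⟩) := hI i le_rfl (by lia)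
    have hzero : S.map' i (i + 1) = 0 := hlast.eq_of_tgt _ _
    rw [hzero]
    exact hasInjectiveDimensionLT_of_iso kernelZeroIsoSource.symm 1
  | succ k ih =>
    have := hI i le_rfl (by lia)
    exact (kernelsShortComplex_shortExact (hS.exact i)).hasInjectiveDimensionLT_X₁ (k + 1)
      (ih (i + 1) (by lia) fun j hj ↦ hI j (by lia)) (hasInjectiveDimensionLT_of_ge _ 1 _ (by lia))

lemma hasInjectiveDimensionLE_of_exact {n : ℕ} {S : ComposableArrows 𝓐 (n + 3)} (hS : S.Exact)
    (hfirst : IsZero (S.obj 0)) (hlast : IsZero (S.obj (Fin.last (n + 3))))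
    (hI : ∀ (i : ℕ) (_ : 2 ≤ i) (_ : i ≤ n + 2), Injective (S.obj ⟨i, by lia⟩)) :
    HasInjectiveDimensionLE (S.obj ⟨1, by lia⟩) n := by
  have hmono : Mono (S.map' 1 2) := (hS.exact 0).mono_g (hfirst.eq_of_src _ _)
  have hkernel : IsZero (kernel (S.map' 1 2)) := isZero_kernel_of_mono _
  have := hkernel.hasInjectiveDimensionLT_zero
  exact (kernelsShortComplex_shortExact (hS.exact 1)).hasInjectiveDimensionLT_X₂ (n + 1)
    (hasInjectiveDimensionLT_of_ge _ 0 _ (by lia))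
    (hasInjectiveDimensionLE_kernel_of_exact hS hlast n 2 (by lia) fun j h2 hj ↦ hI j h2 (by lia))

end InjectiveDimension

section Cycles

open HomologicalComplex

variable {𝓐 : Type u} [Category.{v} 𝓐] [Abelian 𝓐] {ι : Type w} {c : ComplexShape ι}

lemma iCycles_toCycles (X : HomologicalComplex 𝓐 c) (i j : ι) :
    X.iCycles i ≫ X.toCycles i j = 0 := by
  rw [← cancel_mono (X.iCycles j), assoc, X.toCycles_i, X.iCycles_d, zero_comp]

/-- The short complex `Zⁱ ⟶ Xⁱ ⟶ Zʲ` formed by the cycles and the terms of a complex `X`. -/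
noncomputable abbrev cyclesShortComplex (X : HomologicalComplex 𝓐 c) (i j : ι) : ShortComplex 𝓐 :=
  ShortComplex.mk (X.iCycles i) (X.toCycles i j) (iCycles_toCycles X i j)

variable {X : HomologicalComplex 𝓐 c} {i j : ι}

lemma epi_toCycles (hij : c.Rel i j) (hX : X.ExactAt j) : Epi (X.toCycles i j) :=
  Preadditive.epi_of_isZero_cokernel' _ (X.homologyIsCokernel i j (c.prev_eq' hij))
    hX.isZero_homology

lemma cyclesShortComplex_shortExact (hij : c.Rel i j) (hX : X.ExactAt j) :
    (cyclesShortComplex X i j).ShortExact where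
  exact := by
    let φ : cyclesShortComplex X i j ⟶ ShortComplex.mk (X.iCycles i) (X.d i j) (X.iCycles_d i j) :=
      { τ₁ := 𝟙 _, τ₂ := 𝟙 _, τ₃ := X.iCycles j }
    rw [ShortComplex.exact_iff_of_epi_of_isIso_of_mono φ]
    exact ShortComplex.exact_of_f_is_kernel _ (X.cyclesIsKernel i j (c.next_eq' hij))
  epi_g := epi_toCycles hij hX

lemma epi_cyclesMap {Y : HomologicalComplex 𝓐 c} (g : X ⟶ Y) [Epi g] (hij : c.Rel i j)
    (hY : Y.ExactAt j) : Epi (cyclesMap g j) := by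
  have := epi_toCycles hij hY
  have comm : X.toCycles i j ≫ cyclesMap g j = g.f i ≫ Y.toCycles i j := by
    simp [← cancel_mono (Y.iCycles j)]
  have := epi_comp (g.f i) (Y.toCycles i j)
  exact epi_of_epi_fac comm

lemma map_cyclesFunctor_shortExact {S : ShortComplex (HomologicalComplex 𝓐 c)}
    (hS : S.ShortExact) (hij : c.Rel i j) (h₃ : S.X₃.ExactAt j) :
    (S.map (cyclesFunctor 𝓐 c j)).ShortExact := by
  have := hS.mono_f
  have := hS.epi_g
  exact
    { exact := cycles_left_exact S hS.exact j
      mono_f := inferInstanceAs (Mono (cyclesMap S.f j))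
      epi_g := epi_cyclesMap S.g hij h₃ }

lemma exactAt_of_homotopy_id_zero (h : Homotopy (𝟙 X) 0) (i : ι) : X.ExactAt i := by
  rw [exactAt_iff_isZero_homology, IsZero.iff_id_eq_zero, ← homologyMap_id, h.homologyMap_eq,
    homologyMap_zero]

/-- The cycles of a contractible complex are retracts of its terms, so they are injective when the
terms are. -/
noncomputable def cyclesRetract (h : Homotopy (𝟙 X) 0) (i : ι) :
    Retract (X.cycles i) (X.X i) where
  i := X.iCycles i
  r := h.hom i (c.prev i) ≫ X.toCycles (c.prev i) i
  retract := by
    have hi : 𝟙 (X.X i) = X.d i (c.next i) ≫ h.hom (c.next i) i +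
        h.hom i (c.prev i) ≫ X.d (c.prev i) i := by
      simpa [dNext, prevD] using h.comm i
    rw [← cancel_mono (X.iCycles i)]
    simpa using X.iCycles i ≫= hi.symm

end Cycles

section Contractible

open HomologicalComplex CochainComplex CochainComplex.HomComplex

variable {𝓐 : Type u} [Category.{v} 𝓐] [Abelian 𝓐] {X : CochainComplex 𝓐 ℤ}

lemma nonempty_homotopy_id_zero_of_injective_cycles (hX : ∀ i, X.ExactAt i)
    (hZ : ∀ i, Injective (X.cycles i)) : Nonempty (Homotopy (𝟙 X) 0) := by
  let σ i j (hij : i + 1 = j) := (cyclesShortComplex_shortExact hij (hX j)).splittingOfInjective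
  have r_i i j hij : (σ i j hij).r ≫ X.iCycles i + X.toCycles i j ≫ (σ i j hij).s = 𝟙 _ :=
    (σ i j hij).id
  have i_r i j hij : X.iCycles i ≫ (σ i j hij).r = 𝟙 _ := (σ i j hij).f_r
  have s_toCycles i j hij : (σ i j hij).s ≫ X.toCycles i j = 𝟙 _ := (σ i j hij).s_g
  let h : Cochain X X (-1) := .mk fun p q hpq ↦ (σ p (p + 1) rfl).r ≫ (σ q p (by lia)).s
  have h_d (p : ℤ) : h.v p (p - 1) rfl ≫ X.d (p - 1) p = (σ p (p + 1) rfl).r ≫ X.iCycles p := by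
    rw [Cochain.mk_v, ← X.toCycles_i, assoc, reassoc_of% (s_toCycles (p - 1) p (by lia))]
  have d_h (p : ℤ) : X.d p (p + 1) ≫ h.v (p + 1) p (by lia) =
      X.toCycles p (p + 1) ≫ (σ p (p + 1) rfl).s := by
    rw [Cochain.mk_v, ← X.toCycles_i, assoc, reassoc_of% (i_r (p + 1) (p + 1 + 1) rfl)]
  refine ⟨(Cochain.equivHomotopy (𝟙 X) 0).symm ⟨h, ?_⟩⟩
  ext p
  rw [Cochain.ofHom_zero, add_zero, Cochain.ofHom_v, HomologicalComplex.id_f,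
    δ_v (-1) 0 (by lia) _ p p (by lia) (p - 1) (p + 1) rfl rfl, h_d, d_h]
  simpa using (r_i p (p + 1) rfl).symm

lemma exists_mono_contractible_injective [EnoughInjectives 𝓐] (X : CochainComplex 𝓐 ℤ) :
    ∃ (I : CochainComplex 𝓐 ℤ) (f : X ⟶ I),
      Mono f ∧ (∀ i, Injective (I.X i)) ∧ Nonempty (Homotopy (𝟙 I) 0) := by
  let f := cm5b.i (𝟙 X) ≫ biprod.fst
  have hf (n : ℤ) : Mono (f.f n) := by
    have : Mono (f.f n ≫ (mappingCone.snd (𝟙 (cm5b.I X))).v n n (add_zero n)) := by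
      rw [HomologicalComplex.comp_f, assoc, cm5b.i_f_comp]
      exact Injective.ι_mono (X.X n)
    exact mono_of_mono (f.f n) ((mappingCone.snd (𝟙 (cm5b.I X))).v n n (add_zero n))
  exact ⟨_, f, HomologicalComplex.mono_of_mono_f f hf, fun _ ↦ inferInstance,
    ⟨mappingCone.homotopyToZeroOfId _⟩⟩

end Contractible

section HomAcyclic

open CochainComplex CochainComplex.HomComplex Abelian

/-- The complex `Hom(W, X)` is acyclic: every cocycle, in any degree, is a coboundary. -/
def HomAcyclic {𝓐 : Type u} [Category.{v} 𝓐] [Preadditive 𝓐] (W X : CochainComplex 𝓐 ℤ) : Prop :=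
  ∀ (m n : ℤ) (_ : m + 1 = n) (z : Cocycle W X n), ∃ b : Cochain W X m, δ m n b = z

section Preadditive

variable {𝓐 : Type u} [Category.{v} 𝓐] [Preadditive 𝓐] {W X : CochainComplex 𝓐 ℤ}

lemma HomAcyclic.nonempty_homotopy_zero (h : HomAcyclic W X) (f : W ⟶ X) :
    Nonempty (Homotopy f 0) := by
  obtain ⟨b, hb⟩ := h (-1) 0 (by lia) (Cocycle.ofHom f)
  exact ⟨(Cochain.equivHomotopy f 0).symm ⟨b, by simpa using hb.symm⟩⟩

lemma homAcyclic_of_homotopy_id_zero (h : Homotopy (𝟙 X) 0) (W : CochainComplex 𝓐 ℤ) :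
    HomAcyclic W X := fun m n hmn z ↦
  ⟨z.1.comp (Cochain.ofHomotopy h) (by lia), by
    rw [δ_comp z.1 _ _ (n + 1) 0 n hmn rfl (by lia), δ_ofHomotopy, z.δ_eq_zero, Cochain.ofHom_zero,
      sub_zero, Cochain.comp_id, Cochain.zero_comp, smul_zero, add_zero]⟩

lemma comp_ofHom_injective {Y : CochainComplex 𝓐 ℤ} (f : X ⟶ Y) [∀ i, Mono (f.f i)] {n : ℤ}
    {a b : Cochain W X n}
    (h : a.comp (.ofHom f) (add_zero n) = b.comp (.ofHom f) (add_zero n)) : a = b := by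
  ext p q hpq
  rw [← cancel_mono (f.f q)]
  simpa using Cochain.congr_v h p q hpq

end Preadditive

variable {𝓐 : Type u} [Category.{v} 𝓐] [Abelian 𝓐] {W : CochainComplex 𝓐 ℤ}
  {S : ShortComplex (CochainComplex 𝓐 ℤ)}

lemma map_eval_shortExact (hS : S.ShortExact) (i : ℤ) :
    (S.map (HomologicalComplex.eval 𝓐 (.up ℤ) i)).ShortExact :=
  hS.map_of_exact _

lemma exists_comp_ofHom_f_eq (hS : S.ShortExact) {n : ℤ} (b : Cochain W S.X₂ n)
    (hb : b.comp (.ofHom S.g) (add_zero n) = 0) :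
    ∃ a : Cochain W S.X₁ n, a.comp (.ofHom S.f) (add_zero n) = b := by
  have hv p q hpq : b.v p q hpq ≫ S.g.f q = 0 := by simpa using Cochain.congr_v hb p q hpq
  have := fun i ↦ (map_eval_shortExact hS i).mono_f
  have hlift p q hpq : ∃ a : W.X p ⟶ S.X₁.X q, a ≫ S.f.f q = b.v p q hpq :=
    ⟨(map_eval_shortExact hS q).exact.lift _ (hv p q hpq), ShortComplex.Exact.lift_f _ _ _⟩
  choose a ha using hlift
  exact ⟨.mk a, by ext p q hpq; simpa using ha p q hpq⟩

variable [HasExt.{e} 𝓐]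

lemma exists_comp_ofHom_g_eq (hS : S.ShortExact)
    (hW : ∀ p q, Subsingleton (Ext (W.X p) (S.X₁.X q) 1)) {n : ℤ} (c : Cochain W S.X₃ n) :
    ∃ b : Cochain W S.X₂ n, b.comp (.ofHom S.g) (add_zero n) = c := by
  have hlift p q hpq : ∃ b : W.X p ⟶ S.X₂.X q, b ≫ S.g.f q = c.v p q hpq :=
    exists_comp_g_eq_of_subsingleton_ext (map_eval_shortExact hS q) (hW p q) (c.v p q hpq)
  choose b hb using hlift
  exact ⟨.mk b, by ext p q hpq; simpa using hb p q hpq⟩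

lemma HomAcyclic.of_shortExact (hS : S.ShortExact)
    (hW : ∀ p q, Subsingleton (Ext (W.X p) (S.X₁.X q) 1))
    (h₂ : HomAcyclic W S.X₂) (h₃ : HomAcyclic W S.X₃) : HomAcyclic W S.X₁ := by
  intro m n hmn z
  have := hS.mono_f
  obtain ⟨b, hb⟩ := h₂ m n hmn (z.postcomp S.f)
  have hbg : δ m n (b.comp (.ofHom S.g) (add_zero m)) = 0 := by
    rw [δ_comp_ofHom, hb, Cocycle.postcomp_coe, Cochain.comp_assoc_of_second_is_zero_cochain,
      ← Cochain.ofHom_comp, S.zero, Cochain.ofHom_zero, Cochain.comp_zero]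
  obtain ⟨c', hc'⟩ := h₃ (m - 1) m (by lia) (Cocycle.mk _ n hmn hbg)
  obtain ⟨c, rfl⟩ := exists_comp_ofHom_g_eq hS hW c'
  obtain ⟨a, ha⟩ := exists_comp_ofHom_f_eq hS (b - δ (m - 1) m c) (by
    rw [Cochain.sub_comp, ← δ_comp_ofHom, hc', Cocycle.mk_coe, sub_self])
  refine ⟨a, comp_ofHom_injective S.f ?_⟩
  rw [← δ_comp_ofHom, ha, δ_sub, δ_δ, sub_zero, hb, Cocycle.postcomp_coe]

lemma HomAcyclic.of_hasInjectiveDimensionLE_cycles [EnoughInjectives 𝓐]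
    {X : CochainComplex 𝓐 ℤ} (n : ℕ) (hX : ∀ i, X.ExactAt i)
    (hn : ∀ i, HasInjectiveDimensionLE (X.cycles i) n)
    (hW : ∀ i j k, Subsingleton (Ext (W.X i) (X.cycles j) (k + 1))) : HomAcyclic W X := by
  induction n generalizing X with
  | zero =>
    obtain ⟨h⟩ := nonempty_homotopy_id_zero_of_injective_cycles hX fun i ↦
      injective_iff_hasInjectiveDimensionLT_one.2 (hn i)
    exact homAcyclic_of_homotopy_id_zero h W
  | succ n ih =>
    obtain ⟨I, f, _, hI, ⟨h⟩⟩ := exists_mono_contractible_injective X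
    let S := ShortComplex.mk f (cokernel.π f) (cokernel.condition f)
    have hS : S.ShortExact := { exact := ShortComplex.exact_cokernel f }
    have hS₃ (i : ℤ) : S.X₃.ExactAt i := hS.exactAt_X₃ i
      ((exactAt_of_homotopy_id_zero h i).isZero_homology.epi _)
      fun j _ ↦ (hX j).isZero_homology.mono _
    have hcycles (i : ℤ) : (S.map (HomologicalComplex.cyclesFunctor 𝓐 (.up ℤ) i)).ShortExact :=
      map_cyclesFunctor_shortExact hS (sub_add_cancel i 1) (hS₃ i)
    have hI_cycles (i : ℤ) :
        Injective (S.map (HomologicalComplex.cyclesFunctor 𝓐 (.up ℤ) i)).X₂ :=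
      (cyclesRetract h i).injective
    have hWX (p q : ℤ) : Subsingleton (Ext (W.X p) (X.X q) 1) :=
      subsingleton_ext_X₂ (cyclesShortComplex_shortExact rfl (hX _)) _ 1 (hW p q 0) (hW p _ 0)
    exact .of_shortExact hS hWX (homAcyclic_of_homotopy_id_zero h W) <| ih hS₃
      (fun i ↦ ((hcycles i).hasInjectiveDimensionLT_X₃_iff n (hI_cycles i)).2 (hn i))
      fun i j k ↦ subsingleton_ext_X₃_of_injective_X₂ (hcycles j) _ _ (hW i j (k + 1))

end HomAcyclic

theorem statement10_general {𝓐 : Type u} [Category.{v} 𝓐] [Abelian 𝓐] [EnoughProjectives 𝓐]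
    [EnoughInjectives 𝓐] [HasExt.{e} 𝓐] (C : 𝓐) (n : ℕ) [HasInjectiveDimensionLE C n]
    (Z X : CochainComplex 𝓐 ℤ) (hZ : ∀ i, IsExtLeftOrthogonal C (Z.X i))
    (hXacyclic : ∀ i, X.ExactAt i) (hXcocycles : ∀ i, IsExtBiorthogonal C (X.cycles i))
    (f : Z ⟶ X) : Nonempty (Homotopy f 0) :=
  (HomAcyclic.of_hasInjectiveDimensionLE_cycles n hXacyclic
    (fun i ↦ (hXcocycles i).hasInjectiveDimensionLE n)
    fun i j ↦ (hXcocycles j).subsingleton_ext (hZ i)).nonempty_homotopy_zero f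

theorem statement10 (R : Type v) [Ring R] [HasExt.{e} (ModuleCat.{v} R)]
    (C : ModuleCat.{v} R) (hC : IsBigCotilting C)
    (Z X : CochainComplex (ModuleCat.{v} R) ℤ)
    (hZ : ∀ i : ℤ, InCotiltingClass C (Z.X i))
    (hXacyclic : ∀ i : ℤ, X.ExactAt i)
    (hXcocycles : ∀ i : ℤ, InF0 C (X.cycles i)) :
    ∀ f : Z ⟶ X, Nonempty (Homotopy f 0) := by
  obtain ⟨n, ⟨S, hS, hfirst, hlast, ⟨e⟩, hI⟩, -⟩ := hC
  have := hasInjectiveDimensionLE_of_exact hS hfirst hlast hI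
  have : HasInjectiveDimensionLE C n := hasInjectiveDimensionLT_of_iso e (n + 1)
  exact statement10_general C n Z X hZ hXacyclic hXcocycles
end

section
/- Let R be a ring, C a big cotilting right R-module with cotilting class X_C, and let Z, X be cochain complexes of right R-modules such that every component of Z belongs to X_C and X is a bounded below complex all of whose components are direct summands of products of copies of C. Then the canonical map Hom_{K(R)}(Z, X) → Hom_{D(R)}(Z, X) from homotopy classes of chain maps to morphisms in the derived category is an isomorphism. -/
/-!
Statement 11: Let `R` be a ring and `C` a big cotilting module with cotilting class `X_C`.
If `Z` is a complex with components in `X_C` and `X` is a bounded below complex with components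
in `Prod C`, then the canonical map `Hom_{K(R)}(Z, X) → Hom_{D(R)}(Z, X)` is bijective.
-/

universe e w v u

open CategoryTheory Category Limits

open PaperStmt

/-!
Embed `X` into a bounded below complex `J` of injectives by a quasi-isomorphism, with cokernel `K`.
Since the components of `Z` are Ext-orthogonal to those of `X`, the sequence
`0 → Hom(Z, X) → Hom(Z, J) → Hom(Z, K) → 0` of Hom complexes is exact. The complex `K` is acyclic
and bounded below, its components again are Ext-orthogonal to those of `Z`, and they have finite
injective dimension; this forces `Hom(Z, K)` to be acyclic, by induction on that dimension: embed
`K` in the same way and stop at bounded below acyclic complexes of injectives, into which every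
chain map is null-homotopic. Hence morphisms from `Z` to `X` and to `J` agree in the homotopy
category; they also agree in the derived category, and for the K-injective complex `J` both
categories have the same morphisms.
-/

namespace PaperStmt

lemma shortExact_degreewise {A ι : Type*} [Category* A] [Abelian A] {c : ComplexShape ι}
    {S : ShortComplex (HomologicalComplex A c)} (hS : S.ShortExact) (k : ι) :
    (ShortComplex.mk (S.f.f k) (S.g.f k)
      (by rw [← HomologicalComplex.comp_f, S.zero, HomologicalComplex.zero_f])).ShortExact :=
  (HomologicalComplex.shortExact_iff_degreewise_shortExact S).1 hS k

section Cochains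

open CochainComplex CochainComplex.HomComplex

variable {A : Type*} [Category* A] [Abelian A]

lemma exists_cochain_comp_ofHom_eq {Z J K : CochainComplex A ℤ} {g : J ⟶ K}
    (hg : ∀ i k, Function.Surjective fun ψ : Z.X i ⟶ J.X k ↦ ψ ≫ g.f k)
    {m : ℤ} (β : Cochain Z K m) :
    ∃ γ : Cochain Z J m, γ.comp (Cochain.ofHom g) (add_zero m) = β := by
  choose lift hlift using hg
  exact ⟨Cochain.mk fun p q h ↦ lift p q (β.v p q h), by ext p q h; simpa using hlift p q _⟩

lemma cochain_comp_ofHom_injective {Z W J : CochainComplex A ℤ} (f : W ⟶ J) [Mono f] (m : ℤ) :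
    Function.Injective fun γ : Cochain Z W m ↦ γ.comp (Cochain.ofHom f) (add_zero m) := by
  intro β γ h
  ext p q hpq
  rw [← cancel_mono (f.f q)]
  simpa using Cochain.congr_v h p q hpq

variable {Z : CochainComplex A ℤ} {S : ShortComplex (CochainComplex A ℤ)} (hS : S.ShortExact)
include hS

lemma exists_cochain_comp_f_eq {m : ℤ} (β : Cochain Z S.X₂ m)
    (hβ : β.comp (Cochain.ofHom S.g) (add_zero m) = 0) :
    ∃ γ : Cochain Z S.X₁ m, γ.comp (Cochain.ofHom S.f) (add_zero m) = β := by
  have := hS.mono_f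
  have hlift (p q : ℤ) (hpq : p + m = q) :
      ∃ ψ : Z.X p ⟶ S.X₁.X q, ψ ≫ S.f.f q = β.v p q hpq :=
    ⟨_, (shortExact_degreewise hS q).exact.lift_f _ (by simpa using Cochain.congr_v hβ p q hpq)⟩
  choose lift hlift using hlift
  exact ⟨Cochain.mk lift, by ext p q hpq; simpa using hlift p q hpq⟩

variable (hg : ∀ i k, Function.Surjective fun ψ : Z.X i ⟶ S.X₂.X k ↦ ψ ≫ S.g.f k)
include hg

-- In `0 → Hom(Z, X₁) → Hom(Z, X₂) → Hom(Z, X₃) → 0` the image of `β` is a cocycle, hence `δ κ`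
-- for some `κ`; the cochain `η` is a lift of `κ`.
lemma exists_δ_eq_of_shortExact {m n : ℤ} (hmn : m + 1 = n)
    [Subsingleton (CohomologyClass Z S.X₃ m)] (β : Cochain Z S.X₂ m) (z : Cochain Z S.X₁ n)
    (hβ : δ m n β = z.comp (Cochain.ofHom S.f) (add_zero n)) :
    ∃ (γ : Cochain Z S.X₁ m) (η : Cochain Z S.X₂ (m - 1)),
      δ m n γ = z ∧ γ.comp (Cochain.ofHom S.f) (add_zero m) = β - δ (m - 1) m η := by
  have := hS.mono_f
  have hβg : δ m n (β.comp (Cochain.ofHom S.g) (add_zero m)) = 0 := by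
    rw [δ_comp_ofHom, hβ, Cochain.comp_assoc_of_second_is_zero_cochain, ← Cochain.ofHom_comp,
      S.zero, Cochain.ofHom_zero, Cochain.comp_zero]
  obtain ⟨κ, hκ⟩ := (mem_coboundaries_iff _ (m - 1) (by lia)).1 <|
    (CohomologyClass.mk_eq_zero_iff (Cocycle.mk _ n hmn hβg)).1 (Subsingleton.elim _ _)
  obtain ⟨η, rfl⟩ := exists_cochain_comp_ofHom_eq hg κ
  obtain ⟨γ, hγ⟩ := exists_cochain_comp_f_eq hS (β - δ (m - 1) m η) (by
    rw [Cochain.sub_comp, ← δ_comp_ofHom, hκ]; exact sub_self _)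
  refine ⟨γ, η, cochain_comp_ofHom_injective S.f n ?_, hγ⟩
  dsimp only
  rw [← δ_comp_ofHom, hγ, δ_sub, δ_δ, sub_zero, hβ]

lemma subsingleton_cohomologyClass_X₁ {m n : ℤ} (hmn : m + 1 = n)
    [Subsingleton (CohomologyClass Z S.X₃ m)] [Subsingleton (CohomologyClass Z S.X₂ n)] :
    Subsingleton (CohomologyClass Z S.X₁ n) := by
  refine subsingleton_of_forall_eq 0 fun x ↦ ?_
  obtain ⟨z, rfl⟩ := x.mk_surjective
  obtain ⟨β, hβ⟩ := (mem_coboundaries_iff _ m hmn).1 <|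
    (CohomologyClass.mk_eq_zero_iff (z.postcomp S.f)).1 (Subsingleton.elim _ _)
  obtain ⟨γ, -, hγ, -⟩ := exists_δ_eq_of_shortExact hS hg hmn β z.1 hβ
  exact (CohomologyClass.mk_eq_zero_iff z).2 ((mem_coboundaries_iff z m hmn).2 ⟨γ, hγ⟩)

variable (Z) in
lemma quotient_map_postcomp_injective [Subsingleton (CohomologyClass Z S.X₃ (-1))] :
    Function.Injective fun u : (HomotopyCategory.quotient A (ComplexShape.up ℤ)).obj Z ⟶ _ ↦
      u ≫ (HomotopyCategory.quotient A _).map S.f := by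
  let q := HomotopyCategory.quotient A (ComplexShape.up ℤ)
  refine (injective_iff_map_eq_zero (Preadditive.rightComp (q.obj Z) (q.map S.f))).2 fun u hu ↦ ?_
  obtain ⟨a, rfl⟩ := q.map_surjective u
  have ha : q.map (a ≫ S.f) = 0 := (q.map_comp a S.f).trans hu
  obtain ⟨h⟩ := (HomotopyCategory.quotient_map_eq_zero_iff _).1 ha
  obtain ⟨β, hβ⟩ := Cochain.equivHomotopy _ _ h
  obtain ⟨γ, -, hγ, -⟩ := exists_δ_eq_of_shortExact hS hg (neg_add_cancel 1) β (Cochain.ofHom a)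
    (by simpa using hβ.symm)
  exact (HomotopyCategory.quotient_map_eq_zero_iff a).2
    ⟨(Cochain.equivHomotopy _ _).symm ⟨γ, by simp [hγ]⟩⟩

variable (Z) in
lemma quotient_map_postcomp_surjective [Subsingleton (CohomologyClass Z S.X₃ 0)] :
    Function.Surjective fun u : (HomotopyCategory.quotient A (ComplexShape.up ℤ)).obj Z ⟶ _ ↦
      u ≫ (HomotopyCategory.quotient A _).map S.f := by
  let q := HomotopyCategory.quotient A (ComplexShape.up ℤ)
  intro v
  obtain ⟨b, rfl⟩ := q.map_surjective v
  obtain ⟨γ, η, hγ, hγη⟩ := exists_δ_eq_of_shortExact hS hg (zero_add 1) (Cochain.ofHom b) 0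
    (by simp)
  let a : Z ⟶ S.X₁ := (Cocycle.mk γ 1 (zero_add 1) hγ).homOf
  have ha : Cochain.ofHom a = γ := Cocycle.cochain_ofHom_homOf_eq_coe _
  refine ⟨q.map a, ?_⟩
  dsimp only
  rw [← q.map_comp]
  refine (HomotopyCategory.eq_of_homotopy _ _ ((Cochain.equivHomotopy _ _).symm ⟨η, ?_⟩)).symm
  rw [Cochain.ofHom_comp, ha, hγη]
  simp

end Cochains

section Ext

open Abelian

variable {A : Type*} [Category* A] [Abelian A] [HasExt.{e} A]

lemma subsingleton_ext_of_retract {M X : A} (r : Retract M X) (Y : A) (n : ℕ)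
    [Subsingleton (Ext Y X n)] : Subsingleton (Ext Y M n) := by
  refine subsingleton_of_forall_eq 0 fun x ↦ ?_
  rw [← x.comp_mk₀_id, ← r.retract, ← Ext.mk₀_comp_mk₀, ← Ext.comp_assoc_of_second_deg_zero,
    Subsingleton.elim (x.comp (Ext.mk₀ r.i) (add_zero n)) 0, Ext.zero_comp]

section ShortExact

variable {S : ShortComplex A} (hS : S.ShortExact)
include hS

lemma subsingleton_ext_X₃ (Y : A) (n : ℕ) [Subsingleton (Ext Y S.X₂ n)]
    [Subsingleton (Ext Y S.X₁ (n + 1))] : Subsingleton (Ext Y S.X₃ n) := by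
  refine subsingleton_of_forall_eq 0 fun x ↦ ?_
  obtain ⟨y, rfl⟩ := Ext.covariant_sequence_exact₃ Y hS x rfl (Subsingleton.elim _ _)
  rw [Subsingleton.elim y 0, Ext.zero_comp]

lemma surjective_comp_g (Y : A) [Subsingleton (Ext Y S.X₁ 1)] :
    Function.Surjective fun ψ : Y ⟶ S.X₂ ↦ ψ ≫ S.g := by
  intro φ
  obtain ⟨y, hy⟩ := Ext.covariant_sequence_exact₃ Y hS (Ext.mk₀ φ) (zero_add 1)
    (Subsingleton.elim _ _)
  obtain ⟨ψ, rfl⟩ := Ext.homEquiv₀.symm.surjective y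
  exact ⟨ψ, Ext.homEquiv₀.symm.injective (by simpa using hy)⟩

variable [Projective S.X₂] (Y : A)

lemma subsingleton_ext_one_iff_surjective_f_comp :
    Subsingleton (Ext S.X₃ Y 1) ↔ Function.Surjective fun ψ : S.X₂ ⟶ Y ↦ S.f ≫ ψ := by
  refine ⟨fun _ φ ↦ ?_, fun h ↦ subsingleton_of_forall_eq 0 fun x ↦ ?_⟩
  · obtain ⟨y, hy⟩ := Ext.contravariant_sequence_exact₁ hS Y (Ext.mk₀ φ) (add_zero 1)
      (Subsingleton.elim _ _)
    obtain ⟨ψ, rfl⟩ := Ext.homEquiv₀.symm.surjective y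
    exact ⟨ψ, Ext.homEquiv₀.symm.injective (by simpa using hy)⟩
  · obtain ⟨y, rfl⟩ := Ext.contravariant_sequence_exact₃ hS Y x
      (Ext.eq_zero_of_projective _) (add_zero 1)
    obtain ⟨φ, rfl⟩ := Ext.homEquiv₀.symm.surjective y
    obtain ⟨ψ, rfl⟩ := h φ
    rw [Ext.homEquiv₀_symm_apply, ← Ext.mk₀_comp_mk₀]
    exact hS.extClass_comp_assoc _

lemma subsingleton_ext_succ_iff (n : ℕ) :
    Subsingleton (Ext S.X₃ Y (n + 2)) ↔ Subsingleton (Ext S.X₁ Y (n + 1)) := by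
  refine ⟨fun _ ↦ subsingleton_of_forall_eq 0 fun x ↦ ?_,
    fun _ ↦ subsingleton_of_forall_eq 0 fun x ↦ ?_⟩
  · obtain ⟨y, rfl⟩ := Ext.contravariant_sequence_exact₁ hS Y x (n₁ := n + 2) (by lia)
      (Subsingleton.elim _ _)
    rw [Ext.eq_zero_of_projective y, Ext.comp_zero]
  · obtain ⟨y, rfl⟩ := Ext.contravariant_sequence_exact₃ hS Y x
      (Ext.eq_zero_of_projective _) (n₀ := n + 1) (by lia)
    rw [Subsingleton.elim y 0, Ext.comp_zero]

end ShortExact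

lemma subsingleton_ext_pi [EnoughProjectives A] {ι : Type*} (C : ι → A) [HasProduct C] (n : ℕ)
    (Y : A) [∀ i, Subsingleton (Ext Y (C i) (n + 1))] : Subsingleton (Ext Y (∏ᶜ C) (n + 1)) := by
  induction n generalizing Y with
  | zero =>
    have hS : (ShortComplex.mk _ _ (kernel.condition (Projective.π Y))).ShortExact :=
      { exact := ShortComplex.exact_kernel _ }
    refine (subsingleton_ext_one_iff_surjective_f_comp hS _).2 fun φ ↦ ?_
    choose ψ hψ using fun i ↦
      (subsingleton_ext_one_iff_surjective_f_comp hS (C i)).1 inferInstance (φ ≫ Pi.π C i)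
    exact ⟨Pi.lift ψ, Pi.hom_ext _ _ fun i ↦ by simpa using hψ i⟩
  | succ n ih =>
    have hS : (ShortComplex.mk _ _ (kernel.condition (Projective.π Y))).ShortExact :=
      { exact := ShortComplex.exact_kernel _ }
    have (i : ι) := (subsingleton_ext_succ_iff hS (C i) n).1 inferInstance
    exact (subsingleton_ext_succ_iff hS _ n).2 (ih _)

end Ext

section Acyclic

open CochainComplex CochainComplex.HomComplex

variable {A : Type*} [Category* A] [Abelian A]

lemma exists_shortExact_quasiIso_injective [EnoughInjectives A] (W : CochainComplex A ℤ) (d : ℤ)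
    [W.IsStrictlyGE d] :
    ∃ (J K : CochainComplex A ℤ) (f : W ⟶ J) (g : J ⟶ K) (w : f ≫ g = 0),
      (ShortComplex.mk f g w).ShortExact ∧ QuasiIso f ∧ (∀ k, Injective (J.X k)) ∧
      J.IsStrictlyGE (d - 1) ∧ K.IsStrictlyGE (d - 1) := by
  obtain ⟨J, f, _, hf, hJ, hJd⟩ :=
    Plus.modelCategoryQuillen.exists_mono_quasiIso_injective W (d - 1) d (by lia)
  refine ⟨J, cokernel f, f, cokernel.π f, cokernel.condition f,
    { exact := ShortComplex.exact_cokernel f }, hf, hJ, hJd, ?_⟩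
  exact (isStrictlyGE_iff _ _).2 fun i hi ↦
    (J.isZero_of_isStrictlyGE (d - 1) i hi).of_epi ((cokernel.π f).f i)

lemma hasInjectiveDimensionLE_X₃_X {S : ShortComplex (CochainComplex A ℤ)} (hS : S.ShortExact)
    [∀ k, Injective (S.X₂.X k)] {n : ℕ}
    (hdim : ∀ k, HasInjectiveDimensionLE (S.X₁.X k) (n + 1)) (k : ℤ) :
    HasInjectiveDimensionLE (S.X₃.X k) n :=
  ((shortExact_degreewise hS k).hasInjectiveDimensionLT_X₃_iff n inferInstance).2 (hdim k)

lemma subsingleton_cohomologyClass_of_isKInjective (Z J : CochainComplex A ℤ) [J.IsKInjective]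
    (hJ : J.Acyclic) (m : ℤ) : Subsingleton (CohomologyClass Z J m) := by
  refine subsingleton_of_forall_eq 0 fun x ↦ ?_
  obtain ⟨z, rfl⟩ := x.mk_surjective
  exact (CohomologyClass.mk_eq_zero_iff z).2 <| (mem_coboundaries_iff z (m - 1) (by lia)).2 <|
    IsKInjective.eq_δ_of_cocycle' z hJ (m - 1) (by lia)

variable [HasExt.{e} A]

section ShortExact

variable {Z : CochainComplex A ℤ} {S : ShortComplex (CochainComplex A ℤ)} (hS : S.ShortExact)
include hS

lemma surjective_comp_g_f (hZ : ∀ i k, Subsingleton (Abelian.Ext (Z.X i) (S.X₁.X k) 1)) (i k : ℤ) :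
    Function.Surjective fun ψ : Z.X i ⟶ S.X₂.X k ↦ ψ ≫ S.g.f k :=
  have := hZ i k
  surjective_comp_g (shortExact_degreewise hS k) (Z.X i)

lemma subsingleton_ext_X₃_X [∀ k, Injective (S.X₂.X k)]
    (hZ : ∀ i k j, Subsingleton (Abelian.Ext (Z.X i) (S.X₁.X k) (j + 1))) (i k : ℤ) (j : ℕ) :
    Subsingleton (Abelian.Ext (Z.X i) (S.X₃.X k) (j + 1)) :=
  have := Abelian.Ext.subsingleton_of_injective (Z.X i) (S.X₂.X k) j
  have := hZ i k (j + 1)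
  subsingleton_ext_X₃ (shortExact_degreewise hS k) (Z.X i) (j + 1)

end ShortExact

variable [EnoughInjectives A]

lemma subsingleton_cohomologyClass_of_acyclic {Z W : CochainComplex A ℤ} (d : ℤ) [W.IsStrictlyGE d]
    (hW : W.Acyclic) (n : ℕ) (hdim : ∀ k, HasInjectiveDimensionLE (W.X k) n)
    (hZ : ∀ i k j, Subsingleton (Abelian.Ext (Z.X i) (W.X k) (j + 1))) (m : ℤ) :
    Subsingleton (CohomologyClass Z W m) := by
  induction n generalizing W d m with
  | zero =>
    have (k : ℤ) : Injective (W.X k) := injective_iff_hasInjectiveDimensionLT_one.2 (hdim k)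
    have := isKInjective_of_injective W d
    exact subsingleton_cohomologyClass_of_isKInjective Z W hW m
  | succ n ih =>
    obtain ⟨J, K, f, g, w, hS, hf, _, _, _⟩ := exists_shortExact_quasiIso_injective W d
    have := isKInjective_of_injective J (d - 1)
    have hK : K.Acyclic := hS.acyclic_X₃ hf
    have := ih (d - 1) hK (hasInjectiveDimensionLE_X₃_X hS hdim) (subsingleton_ext_X₃_X hS hZ)
      (m - 1)
    have := subsingleton_cohomologyClass_of_isKInjective Z J (hS.acyclic_X₂ hW hK) m
    exact subsingleton_cohomologyClass_X₁ hS
      (surjective_comp_g_f hS fun i k ↦ hZ i k 0) (sub_add_cancel m 1)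

end Acyclic

section DerivedCategory

variable {A : Type*} [Category* A] [Abelian A] [HasDerivedCategory.{w} A]

lemma Qh_map_bijective_of_quasiIso {Z : HomotopyCategory A (.up ℤ)} {X J : CochainComplex A ℤ}
    (f : X ⟶ J) [QuasiIso f]
    (hf : Function.Bijective fun u : Z ⟶ _ ↦ u ≫ (HomotopyCategory.quotient A (.up ℤ)).map f)
    (hJ : Function.Bijective
      (DerivedCategory.Qh.map : (Z ⟶ (HomotopyCategory.quotient A (.up ℤ)).obj J) → _)) :
    Function.Bijective
      (DerivedCategory.Qh.map : (Z ⟶ (HomotopyCategory.quotient A (.up ℤ)).obj X) → _) := by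
  let q := HomotopyCategory.quotient A (.up ℤ)
  have : IsIso (DerivedCategory.Qh.map (q.map f)) :=
    inferInstanceAs (IsIso (DerivedCategory.Q.map f))
  refine (Function.Bijective.of_comp_iff' (f := fun v ↦ v ≫ DerivedCategory.Qh.map (q.map f))
    (asIso (DerivedCategory.Qh.map (q.map f))).homToEquiv.bijective _).1 ?_
  convert hJ.comp hf using 1
  exact funext fun u ↦ (DerivedCategory.Qh.map_comp u (q.map f)).symm

end DerivedCategory

section InjectiveDimension

variable {A : Type*} [Category* A] [Abelian A]

lemma shortExact_kernel_ι_kernel_lift {S : ShortComplex A} (hS : S.Exact) :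
    (ShortComplex.mk (kernel.ι S.f) (kernel.lift S.g S.f S.zero)
      (by simp [← cancel_mono (kernel.ι S.g)])).ShortExact where
  exact := Iff.mpr (ShortComplex.exact_iff_of_epi_of_isIso_of_mono
    (S₂ := ShortComplex.mk _ _ (kernel.condition S.f))
    { τ₁ := 𝟙 _, τ₂ := 𝟙 _, τ₃ := kernel.ι S.g }) (ShortComplex.exact_kernel S.f)
  epi_g := hS.epi_kernelLift

lemma hasInjectiveDimensionLE_kernel_map' {N : ℕ} (S : ComposableArrows A (N + 1)) (hS : S.Exact)
    (hN : IsZero (S.obj (Fin.last (N + 1)))) {i n : ℕ} (hi : i + n = N)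
    (hinj : ∀ j (_ : i ≤ j) (_ : j ≤ N), Injective (S.obj ⟨j, by lia⟩)) :
    HasInjectiveDimensionLE (kernel (S.map' i (i + 1))) n := by
  induction n generalizing i with
  | zero =>
    obtain rfl : i = N := hi
    have : Injective (S.obj ⟨i, by lia⟩) := hinj i le_rfl le_rfl
    rw [hN.eq_of_tgt (S.map' i (i + 1)) 0]
    exact hasInjectiveDimensionLT_of_iso kernelZeroIsoSource.symm 1
  | succ n ih =>
    exact ((shortExact_kernel_ι_kernel_lift (hS.exact i)).hasInjectiveDimensionLT_X₃_iff n
      (hinj i le_rfl (by lia))).1 (ih (by lia) fun j hj ↦ hinj j (by lia))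

end InjectiveDimension

section ModuleCat

variable {R : Type v} [Ring R]

lemma InjDimLE.hasInjectiveDimensionLE {C : ModuleCat.{v} R} {n : ℕ} (h : InjDimLE C n) :
    HasInjectiveDimensionLE C n := by
  obtain ⟨S, hS, h0, hN, ⟨e⟩, hinj⟩ := h
  have hker₂ : HasInjectiveDimensionLE (kernel (S.map' 2 3)) n :=
    hasInjectiveDimensionLE_kernel_map' S hS hN (Nat.add_comm 2 n) hinj
  have : Mono (S.map' 1 2) := (hS.exact 0).mono_g (h0.eq_of_src _ _)
  have hker₁ : IsZero (kernel (S.map' 1 2)) := isZero_kernel_of_mono _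
  have := hker₁.hasInjectiveDimensionLT_zero
  have := (shortExact_kernel_ι_kernel_lift (hS.exact 1)).hasInjectiveDimensionLT_X₂ (n + 1)
    (hasInjectiveDimensionLT_of_ge _ 0 _ (n + 1).zero_le) hker₂
  exact hasInjectiveDimensionLT_of_iso e (n + 1)

lemma InProdOf.subsingleton_ext [HasExt.{e} (ModuleCat.{v} R)] {C M : ModuleCat.{v} R}
    (hM : InProdOf C M) (Y : ModuleCat.{v} R) (n : ℕ) [Subsingleton (Abelian.Ext Y C (n + 1))] :
    Subsingleton (Abelian.Ext Y M (n + 1)) := by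
  obtain ⟨ι, s, r, hsr⟩ := hM
  have := subsingleton_ext_pi (fun _ : ι ↦ C) n Y
  exact subsingleton_ext_of_retract ⟨s, r, hsr⟩ Y (n + 1)

lemma InProdOf.hasInjectiveDimensionLE {C M : ModuleCat.{v} R} (hM : InProdOf C M) (n : ℕ)
    [HasInjectiveDimensionLE C n] : HasInjectiveDimensionLE M n := by
  refine hasInjectiveDimensionLT_of_enoughProjectives M (n + 1) fun Y ↦ ?_
  have := HasInjectiveDimensionLT.subsingleton C (n + 1) (n + 1) le_rfl Y
  exact hM.subsingleton_ext Y n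

end ModuleCat

end PaperStmt

theorem statement11_general {A : Type*} [Category* A] [Abelian A] [EnoughInjectives A]
    [HasExt.{e} A] [HasDerivedCategory.{w} A] (Z X : CochainComplex A ℤ) (d : ℤ)
    [X.IsStrictlyGE d] (n : ℕ) (hdim : ∀ k, HasInjectiveDimensionLE (X.X k) n)
    (hZ : ∀ i k j, Subsingleton (Abelian.Ext (Z.X i) (X.X k) (j + 1))) :
    Function.Bijective
      (fun f : ((HomotopyCategory.quotient A (ComplexShape.up ℤ)).obj Z ⟶
          (HomotopyCategory.quotient A (ComplexShape.up ℤ)).obj X) =>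
        DerivedCategory.Qh.map f) := by
  obtain ⟨J, K, f, g, w, hS, hf, _, _, _⟩ := exists_shortExact_quasiIso_injective X d
  have := CochainComplex.isKInjective_of_injective J (d - 1)
  have hdim' (k : ℤ) : HasInjectiveDimensionLE (X.X k) (n + 1) :=
    hasInjectiveDimensionLT_of_ge _ (n + 1) _ (by lia)
  have (m : ℤ) := subsingleton_cohomologyClass_of_acyclic (d - 1) (hS.acyclic_X₃ hf) n
    (hasInjectiveDimensionLE_X₃_X hS hdim') (subsingleton_ext_X₃_X hS hZ) m
  have hg := surjective_comp_g_f hS fun i k ↦ hZ i k 0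
  exact Qh_map_bijective_of_quasiIso f
    ⟨quotient_map_postcomp_injective Z hS hg, quotient_map_postcomp_surjective Z hS hg⟩
    (CochainComplex.IsKInjective.Qh_map_bijective _ J)

theorem statement11 (R : Type v) [Ring R] [HasExt.{e} (ModuleCat.{v} R)]
    [HasDerivedCategory.{w} (ModuleCat.{v} R)]
    (C : ModuleCat.{v} R) (hC : IsBigCotilting C)
    (Z X : CochainComplex (ModuleCat.{v} R) ℤ)
    (hZ : ∀ i : ℤ, InCotiltingClass C (Z.X i))
    (hXbdd : ∃ m : ℤ, ∀ i : ℤ, i < m → IsZero (X.X i))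
    (hXcomp : ∀ i : ℤ, InProdOf C (X.X i)) :
    Function.Bijective
      (fun f : ((HomotopyCategory.quotient (ModuleCat.{v} R) (ComplexShape.up ℤ)).obj Z ⟶
          (HomotopyCategory.quotient (ModuleCat.{v} R) (ComplexShape.up ℤ)).obj X) =>
        DerivedCategory.Qh.map f) := by
  obtain ⟨n, hn, -, -⟩ := hC
  obtain ⟨d, hd⟩ := hXbdd
  have := hn.hasInjectiveDimensionLE
  have : X.IsStrictlyGE d := (CochainComplex.isStrictlyGE_iff X d).2 hd
  refine statement11_general Z X d n (fun k ↦ (hXcomp k).hasInjectiveDimensionLE n) fun i k j ↦ ?_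
  have := hZ i (j + 1) j.succ_pos
  exact (hXcomp k).subsingleton_ext (Z.X i) j
end

section
/- Let R be a ring, C a big cotilting right R-module, X_C its cotilting class, and G = {X ∈ D(R) : Hom_{D(R)}(X, Σ^i C) = 0 for all i ≠ 0} the tilted abelian category (the heart of the cotilting t-structure). Then both X_C and Prod C (the class of direct summands of products of copies of C) are coresolving subcategories of G: each is closed under retracts and extensions in G, closed under cokernels of monomorphisms in G, and cogenerating in G (every object of G admits a monomorphism into an object of the class). -/
/-!
Statement 15: Let `R` be a ring, `C` a big cotilting module, `X_C` its cotilting class and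
`G ⊆ D(R)` the heart of the cotilting t-structure.  Then both `X_C` and `Prod C` are
coresolving subcategories of `G`: contained in `G`, closed under retracts, extensions and
cokernels of monomorphisms in `G`, and cogenerating in `G`.  (Short exact sequences in the
heart `G` correspond to distinguished triangles of `D(R)` with all vertices in `G`.)
-/

universe e w v u

open CategoryTheory Category Limits Pretriangulated

namespace PaperStmt

variable {R : Type v} [Ring R]

variable [HasDerivedCategory.{w} (ModuleCat.{v} R)]

/-- Membership in the heart `G` of the cotilting t-structure:
`Hom(X, Σ^i C) = 0` for all `i ≠ 0`. -/
def InHeart (C : ModuleCat.{v} R) (X : DerivedCategory (ModuleCat.{v} R)) : Prop :=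
  ∀ i : ℤ, i ≠ 0 →
    ∀ f : X ⟶ (((DerivedCategory.singleFunctor (ModuleCat.{v} R) 0).obj C)⟦i⟧), f = 0

/-- A class `P` of objects of `D(R)` is a coresolving subcategory of the heart `G`:
it is contained in `G`, closed under retracts, extensions and cokernels of monomorphisms
in `G` (expressed via distinguished triangles), and cogenerating in `G`. -/
def IsCoresolvingInHeart (C : ModuleCat.{v} R)
    (P : DerivedCategory (ModuleCat.{v} R) → Prop) : Prop :=
  (∀ X, P X → InHeart C X) ∧
  (∀ X Y, (∃ (s : Y ⟶ X) (r : X ⟶ Y), s ≫ r = 𝟙 Y) → P X → P Y) ∧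
  (∀ T : Triangle (DerivedCategory (ModuleCat.{v} R)),
    (T ∈ distTriang _) → P T.obj₁ → P T.obj₃ → P T.obj₂) ∧
  (∀ T : Triangle (DerivedCategory (ModuleCat.{v} R)),
    (T ∈ distTriang _) → P T.obj₁ → P T.obj₂ → InHeart C T.obj₃ → P T.obj₃) ∧
  (∀ X, InHeart C X → ∃ (W Z : DerivedCategory (ModuleCat.{v} R))
    (f : X ⟶ W) (g : W ⟶ Z) (h : Z ⟶ X⟦(1 : ℤ)⟧),
      (Triangle.mk f g h ∈ distTriang _) ∧ P W ∧ InHeart C Z)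

end PaperStmt

open PaperStmt DerivedCategory

/-!
Three facts reduce the theorem to formal properties of orthogonal classes.

* Every `X` in the heart `G` is cohomologically concentrated in degrees `≥ 0`: the morphisms
  `X ⟶ Σ ^ i C` vanish for `i > 0`, so by dimension shifting along the `Prod C`-resolution of an
  injective cogenerator `E` the morphisms `X ⟶ Σ ^ i E` vanish as well, and these detect the
  negative cohomology of `X`. Hence `X_C = G ∩ D^{≤ 0}`.
* Powers of `C` are also powers in `D(R)`, because a power of an injective resolution of `C` is an
  injective resolution of the power. Hence every `X` in `G` has a morphism `X ⟶ C ^ I` through which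
  all morphisms `X ⟶ C` factor, and the long exact sequence shows that its cone is again in `G`.
* `Prod C` consists of the objects of `G` that are injective relative to the short exact sequences
  of `G`: if `X` is such an object, then the triangle starting with `X ⟶ C ^ I` splits.

The class `G ∩ D^{≤ 0}` is closed under extensions and cokernels because `D^{≤ 0}` is closed under
extensions and `Σ`, and the injective objects are closed under cokernels because a short exact
sequence starting with an injective object splits.
-/

universe t

namespace Cotilting

section Fans

variable {D : Type u} [Category.{v} D] {ι : Type t}

noncomputable def isLimitFanOfBijective {X : ι → D} {P : D} {π : ∀ i, P ⟶ X i}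
    (h : ∀ Y, Function.Bijective fun (f : Y ⟶ P) i ↦ f ≫ π i) : IsLimit (Fan.mk P π) :=
  Fan.IsLimit.mk _ (fun s ↦ ((h s.pt).surjective s.proj).choose)
    (fun s i ↦ congrFun ((h s.pt).surjective s.proj).choose_spec i)
    (fun s m hm ↦ (h s.pt).injective <| by
      rw [((h s.pt).surjective s.proj).choose_spec]
      exact funext hm)

end Fans

section Products

variable {A : Type u} [Category.{v} A] {ι : Type t}

/-- A morphism of complexes into a degreewise product is null-homotopic as soon as its components
are: the homotopies assemble degree by degree. -/
noncomputable def homotopyZeroOfFan [Preadditive A] {κ : Type*} {c : ComplexShape κ}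
    {K P : HomologicalComplex A c} {L : ι → HomologicalComplex A c} {π : ∀ i, P ⟶ L i}
    (hπ : ∀ n, IsLimit (Fan.mk (P.X n) fun i ↦ (π i).f n)) {f : K ⟶ P}
    (h : ∀ i, Homotopy (f ≫ π i) 0) : Homotopy f 0 where
  hom m n := Fan.IsLimit.lift (hπ n) fun i ↦ (h i).hom m n
  zero m n hmn := Fan.IsLimit.hom_ext (hπ n) _ _ fun i ↦ by
    rw [Fan.IsLimit.fac, (h i).zero m n hmn, zero_comp]
  comm n := Fan.IsLimit.hom_ext (hπ n) _ _ fun i ↦ by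
    have hom_eq : (h i).hom =
        fun a b ↦ Fan.IsLimit.lift (hπ b) (fun i ↦ (h i).hom a b) ≫ (π i).f b := by
      ext a b
      exact (Fan.IsLimit.fac (hπ b) (fun i ↦ (h i).hom a b) i).symm
    have comm_i := (h i).comm n
    rw [hom_eq, dNext_comp_right, prevD_comp_right, ← Preadditive.add_comp] at comm_i
    simpa using comm_i

noncomputable def isLimitFanOfDegreewise [HasZeroMorphisms A] {κ : Type*} {c : ComplexShape κ}
    {P : HomologicalComplex A c} {L : ι → HomologicalComplex A c} {π : ∀ i, P ⟶ L i}
    (hπ : ∀ n, IsLimit (Fan.mk (P.X n) fun i ↦ (π i).f n)) : IsLimit (Fan.mk P π) :=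
  HomologicalComplex.isLimitOfEval _ _ fun n ↦
    (isLimitMapConeFanMkEquiv (HomologicalComplex.eval A c n) L π).symm (hπ n)

variable [Abelian A]

lemma isKInjective_of_isLimit_fan {L : ι → CochainComplex A ℤ} [∀ i, (L i).IsKInjective]
    {P : CochainComplex A ℤ} {π : ∀ i, P ⟶ L i}
    (hπ : ∀ n, IsLimit (Fan.mk (P.X n) fun i ↦ (π i).f n)) : P.IsKInjective where
  nonempty_homotopy_zero f hK :=
    ⟨homotopyZeroOfFan hπ fun i ↦ CochainComplex.IsKInjective.homotopyZero (f ≫ π i) hK⟩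

variable [HasDerivedCategory.{w} A]

lemma Q_map_surjective_of_isKInjective (K L : CochainComplex A ℤ) [L.IsKInjective] :
    Function.Surjective (Q.map : (K ⟶ L) → (Q.obj K ⟶ Q.obj L)) := by
  intro f
  obtain ⟨g, hg⟩ := (CochainComplex.IsKInjective.Qh_map_bijective
    ((HomotopyCategory.quotient _ _).obj K) L).surjective
      ((quotientCompQhIso A).hom.app K ≫ f ≫ (quotientCompQhIso A).inv.app L)
  obtain ⟨g, rfl⟩ := (HomotopyCategory.quotient _ _).map_surjective g
  refine ⟨g, (cancel_epi ((quotientCompQhIso A).hom.app K)).1 ?_⟩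
  rw [← quotientCompQhIso_hom_naturality, hg]
  simp

lemma nonempty_homotopy_zero_of_Q_map_eq_zero {K L : CochainComplex A ℤ} [L.IsKInjective]
    {g : K ⟶ L} (hg : Q.map g = 0) : Nonempty (Homotopy g 0) := by
  refine ⟨HomotopyCategory.homotopyOfEq _ _
    ((CochainComplex.IsKInjective.Qh_map_bijective _ L).injective ?_)⟩
  rw [Functor.map_zero, Functor.map_zero, ← cancel_mono ((quotientCompQhIso A).hom.app L),
    quotientCompQhIso_hom_naturality, hg, comp_zero, zero_comp]

/-- K-injective complexes compute morphisms in the derived category, so `Q` preserves their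
products. -/
noncomputable def isLimitFanQMap {L : ι → CochainComplex A ℤ} [∀ i, (L i).IsKInjective]
    {P : CochainComplex A ℤ} {π : ∀ i, P ⟶ L i}
    (hπ : ∀ n, IsLimit (Fan.mk (P.X n) fun i ↦ (π i).f n)) :
    IsLimit (Fan.mk (Q.obj P) fun i ↦ Q.map (π i)) :=
  isLimitFanOfBijective fun Y ↦ by
    have := isKInjective_of_isLimit_fan hπ
    let eY := Q.objObjPreimageIso Y
    constructor
    · intro f g hfg
      obtain ⟨d, hd⟩ := Q_map_surjective_of_isKInjective _ P (eY.hom ≫ (f - g))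
      have Q_map_comp_eq_zero (i : ι) : Q.map (d ≫ π i) = 0 := by
        have hfg_i : f ≫ Q.map (π i) = g ≫ Q.map (π i) := congrFun hfg i
        rw [Functor.map_comp, hd, assoc, Preadditive.sub_comp, hfg_i, sub_self, comp_zero]
      have hd₀ : Q.map d = 0 := by
        rw [Q_map_eq_of_homotopy _ (homotopyZeroOfFan hπ fun i ↦
          (nonempty_homotopy_zero_of_Q_map_eq_zero (Q_map_comp_eq_zero i)).some), Q.map_zero]
      rw [← sub_eq_zero, ← cancel_epi eY.hom, ← hd, hd₀, comp_zero]
    · intro f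
      choose g hg using fun i ↦ Q_map_surjective_of_isKInjective _ (L i) (eY.hom ≫ f i)
      let hP := isLimitFanOfDegreewise hπ
      refine ⟨eY.inv ≫ Q.map (Fan.IsLimit.lift hP g), funext fun i ↦ ?_⟩
      have fac : Fan.IsLimit.lift hP g ≫ π i = g i := Fan.IsLimit.fac hP g i
      simp [← Functor.map_comp, fac, hg]

end Products

section Powers

variable {A : Type u} [Category.{v} A] (ι : Type t) [HasLimitsOfShape (Discrete ι) A]

/-- The functor sending an object to its `ι`-th power, as a limit over a discrete category: its
exactness is then an instance as soon as products are exact. -/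
noncomputable def powerFunctor : A ⥤ A := Functor.const (Discrete ι) ⋙ lim

variable {ι} in
/-- The projections of a power. -/
noncomputable def powerFunctorπ (i : ι) : powerFunctor ι ⟶ 𝟭 A where
  app X := limit.π ((Functor.const (Discrete ι)).obj X) ⟨i⟩
  naturality _ _ f := limMap_π ((Functor.const (Discrete ι)).map f) ⟨i⟩

noncomputable def isLimitPowerFan (X : A) :
    IsLimit (Fan.mk ((powerFunctor ι).obj X) fun i ↦ (powerFunctorπ i).app X) :=
  isLimitFanOfBijective fun Y ↦
    ⟨fun _ _ hfg ↦ limit.hom_ext fun ⟨i⟩ ↦ congrFun hfg i,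
     fun f ↦ ⟨limit.lift ((Functor.const _).obj X) ⟨Y, Discrete.natTrans fun i ↦ f i.as⟩,
      funext fun _ ↦ limit.lift_π _ _⟩⟩

instance [Preadditive A] : (powerFunctor ι : A ⥤ A).Additive where
  map_add {X Y f g} := Fan.IsLimit.hom_ext (isLimitPowerFan ι Y) _ _ fun i ↦ by
    have map_comp_π (h : X ⟶ Y) : (powerFunctor ι).map h ≫ (powerFunctorπ i).app Y =
      (powerFunctorπ i).app X ≫ h := (powerFunctorπ i).naturality h
    change _ ≫ (powerFunctorπ i).app Y = _ ≫ (powerFunctorπ i).app Y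
    simp only [Preadditive.add_comp, map_comp_π, Preadditive.comp_add]

variable {ι} in
/-- The projections of a degreewise power of a complex. -/
noncomputable def powerComplexπ [Preadditive A] {κ : Type*} {c : ComplexShape κ}
    (K : HomologicalComplex A c) (i : ι) :
    ((powerFunctor ι).mapHomologicalComplex c).obj K ⟶ K :=
  (NatTrans.mapHomologicalComplex (powerFunctorπ i) c).app K

variable {ι} in
lemma singleMapHomologicalComplex_inv_comp_powerComplexπ [Preadditive A] [HasZeroObject A]
    {κ : Type*} [DecidableEq κ] (c : ComplexShape κ) (n : κ) (X : A) (i : ι) :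
    (HomologicalComplex.singleMapHomologicalComplex (powerFunctor ι) c n).inv.app X ≫
        powerComplexπ ((HomologicalComplex.single A c n).obj X) i =
      (HomologicalComplex.single A c n).map ((powerFunctorπ i).app X) := by
  refine HomologicalComplex.from_single_hom_ext ?_
  rw [HomologicalComplex.comp_f, HomologicalComplex.singleMapHomologicalComplex_inv_app_self,
    HomologicalComplex.single_map_f_self]
  exact (assoc _ _ _).trans (congrArg (_ ≫ ·) ((powerFunctorπ i).naturality _))

variable [Abelian A] [HasExactLimitsOfShape (Discrete ι) A]

instance : PreservesFiniteLimits (powerFunctor ι : A ⥤ A) :=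
  inferInstanceAs (PreservesFiniteLimits (Functor.const (Discrete ι) ⋙ lim))

instance : PreservesFiniteColimits (powerFunctor ι : A ⥤ A) :=
  inferInstanceAs (PreservesFiniteColimits (Functor.const (Discrete ι) ⋙ lim))

variable [HasDerivedCategory.{w} A]

/-- If `L` is a K-injective resolution of `K`, then `L ^ ι` is one of `K ^ ι`, and hence the
degreewise power of `K` is a power in the derived category. -/
noncomputable def isLimitQPowerFan {K L : CochainComplex A ℤ} [L.IsKInjective] (φ : K ⟶ L)
    [QuasiIso φ] :
    IsLimit (Fan.mk (Q.obj (((powerFunctor ι).mapHomologicalComplex _).obj K))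
      fun i ↦ Q.map (powerComplexπ K i)) := by
  let φι := ((powerFunctor ι).mapHomologicalComplex (.up ℤ)).map φ
  refine (IsLimit.equivOfNatIsoOfIso (Discrete.natIso fun _ ↦ asIso (Q.map φ)) _ _
    (Fan.ext (asIso (Q.map φι)) fun i ↦ ?_)).symm
      (isLimitFanQMap (π := powerComplexπ L) fun n ↦ isLimitPowerFan ι (L.X n))
  change Q.map (powerComplexπ K i) ≫ Q.map φ = Q.map φι ≫ Q.map (powerComplexπ L i)
  rw [← Q.map_comp, ← Q.map_comp]
  exact congrArg Q.map
    ((NatTrans.mapHomologicalComplex (powerFunctorπ i) (.up ℤ)).naturality φ).symm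

noncomputable def isLimitQSinglePowerFan [EnoughInjectives A] (C : A) :
    IsLimit (Fan.mk (Q.obj ((HomologicalComplex.single A (.up ℤ) 0).obj ((powerFunctor ι).obj C)))
      fun i ↦ Q.map ((HomologicalComplex.single A (.up ℤ) 0).map ((powerFunctorπ i).app C))) := by
  let I := InjectiveResolution.of C
  let φ : (HomologicalComplex.single A (.up ℤ) 0).obj C ⟶ I.cochainComplex := I.ι'
  have : QuasiIso φ := inferInstanceAs (QuasiIso I.ι')
  refine IsLimit.ofIsoLimit (isLimitQPowerFan ι φ) (Fan.ext (Q.mapIso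
    ((HomologicalComplex.singleMapHomologicalComplex (powerFunctor ι) (.up ℤ) 0).app C))
    fun i ↦ ?_)
  rw [← Iso.inv_comp_eq]
  change Q.map _ ≫ Q.map _ = Q.map _
  rw [← Q.map_comp]
  exact congrArg Q.map (singleMapHomologicalComplex_inv_comp_powerComplexπ _ 0 C i)

instance [EnoughInjectives A] (C : A) :
    PreservesLimit (Discrete.functor fun _ : ι ↦ C) (singleFunctor A 0) :=
  have : PreservesLimit (Discrete.functor fun _ : ι ↦ C)
      (CochainComplex.singleFunctor A 0 ⋙ Q) :=
    preservesLimit_of_preserves_limit_cone (isLimitPowerFan ι C)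
      ((isLimitMapConeFanMkEquiv _ _ _).symm (isLimitQSinglePowerFan ι C))
  preservesLimit_of_natIso _ (singleFunctorIsoCompQ A 0).symm

end Powers

section Preenvelopes

lemma exists_hom_power_factorsThru {A : Type u} [Category.{v} A] {D : Type*} [Category D]
    (F : A ⥤ D) (C : A) (X : D) [Small.{t} (X ⟶ F.obj C)] [HasProducts.{t} A]
    [∀ ι : Type t, PreservesLimit (Discrete.functor fun _ : ι ↦ C) F] :
    ∃ (ι : Type t) (φ : X ⟶ F.obj (∏ᶜ fun _ : ι ↦ C)), ∀ f : X ⟶ F.obj C, ∃ g, φ ≫ g = f := by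
  let ι := Shrink.{t} (X ⟶ F.obj C)
  let hF := isLimitFanMkObjOfIsLimit F (fun _ : ι ↦ C) _ (productIsProduct fun _ : ι ↦ C)
  refine ⟨ι, Fan.IsLimit.lift hF fun i ↦ (equivShrink _).symm i,
    fun f ↦ ⟨F.map (Pi.π _ (equivShrink _ f)), ?_⟩⟩
  exact (Fan.IsLimit.fac hF _ _).trans ((equivShrink _).symm_apply_apply f)

instance {A : Type u} [Category.{v} A] [Abelian A] [EnoughInjectives A] [HasDerivedCategory.{w} A]
    (X : DerivedCategory A) (C : A) : Small.{v} (X ⟶ (singleFunctor A 0).obj C) := by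
  let I := InjectiveResolution.of C
  let φ : (HomologicalComplex.single A (.up ℤ) 0).obj C ⟶ I.cochainComplex := I.ι'
  have : QuasiIso φ := inferInstanceAs (QuasiIso I.ι')
  let e : Q.obj I.cochainComplex ≅ (singleFunctor A 0).obj C := (asIso (Q.map φ)).symm
  have : Small.{v} (Q.obj (Q.objPreimage X) ⟶ Q.obj I.cochainComplex) :=
    small_of_surjective (Q_map_surjective_of_isKInjective _ _)
  exact small_of_surjective (Iso.homCongr (Q.objObjPreimageIso X) e).surjective

end Preenvelopes

section Orthogonals

variable {T : Type u} [Category.{v} T]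

instance [HasZeroMorphisms T] (P : ObjectProperty T) : P.rightOrthogonal.IsStableUnderRetracts where
  of_retract h hY X f hX := by
    rw [← comp_id f, ← h.retract, ← assoc, hY (f ≫ h.i) hX, zero_comp]

instance [HasZeroMorphisms T] (P : ObjectProperty T) : P.leftOrthogonal.IsStableUnderRetracts where
  of_retract h hY X f hX := by
    rw [← id_comp f, ← h.retract, assoc, hY (h.r ≫ f) hX, comp_zero]

instance (P Q : ObjectProperty T) [P.IsStableUnderRetracts] [Q.IsStableUnderRetracts] :
    (P ⊓ Q).IsStableUnderRetracts where
  of_retract h hY := ⟨P.prop_of_retract h hY.1, Q.prop_of_retract h hY.2⟩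

variable [Preadditive T] [HasShift T ℤ]

instance (P : ObjectProperty T) [P.IsStableUnderRetracts] (n : ℤ) :
    (P.shift n).IsStableUnderRetracts where
  of_retract h hY := P.prop_of_retract (h.map (shiftFunctor T n)) hY

/-- The class of objects `Y` such that `Hom(X, Σ ^ i Y) = 0` for all `i > 0`. -/
def positiveOrthogonal (X : T) : ObjectProperty T :=
  fun Y ↦ ∀ i : ℤ, 0 < i → ∀ f : X ⟶ Y⟦i⟧, f = 0

instance (X : T) : (positiveOrthogonal X).IsStableUnderRetracts where
  of_retract {Y Z} h hZ i hi f := by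
    let h' := h.map (shiftFunctor T i)
    rw [← comp_id f, ← h'.retract, ← assoc, hZ i hi (f ≫ h'.i), zero_comp]

instance (X : T) : (positiveOrthogonal X).IsStableUnderShiftBy (1 : ℤ) where
  le_shift Y hY i hi f := by
    rw [← cancel_mono ((shiftFunctorAdd' T 1 i (1 + i) rfl).inv.app Y), zero_comp]
    exact hY (1 + i) (by lia) _

lemma positiveOrthogonal_of_isLimit_fan {ι : Type t} {X : T} {Y : ι → T} {P : T}
    {π : ∀ k, P ⟶ Y k} (hπ : IsLimit (Fan.mk P π)) (h : ∀ k, positiveOrthogonal X (Y k)) :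
    positiveOrthogonal X P := fun i hi f ↦ by
  refine Fan.IsLimit.hom_ext (isLimitFanMkObjOfIsLimit (shiftFunctor T i) Y π hπ) _ _ fun k ↦ ?_
  exact (h k i hi _).trans zero_comp.symm

/-- The objects `X` such that `Hom(X, Σ ^ i W) = 0` for all `i ≠ 0`: if `W` is a cotilting object,
this is the heart of the associated t-structure. -/
def heart (W : T) : ObjectProperty T :=
  (ObjectProperty.ofObj fun i : {i : ℤ // i ≠ 0} ↦ W⟦i.1⟧).leftOrthogonal

lemma heart_iff {W X : T} : heart W X ↔ ∀ i : ℤ, i ≠ 0 → ∀ f : X ⟶ W⟦i⟧, f = 0 := by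
  refine ⟨fun h i hi f ↦ h f (.mk (⟨i, hi⟩ : {i : ℤ // i ≠ 0})), fun h _ f hY ↦ ?_⟩
  obtain ⟨i⟩ := hY
  exact h i.1 i.2 f

lemma heart.positiveOrthogonal {W X : T} (h : heart W X) : positiveOrthogonal X W :=
  fun i hi ↦ heart_iff.1 h i hi.ne'

instance (W : T) : (heart W).IsStableUnderRetracts :=
  inferInstanceAs (ObjectProperty.leftOrthogonal _).IsStableUnderRetracts

variable [∀ n : ℤ, (shiftFunctor T n).Additive]

lemma shift_hom_eq_zero {X Y : T} {a m b : ℤ} (h : a + m = b) (hXY : ∀ f : X ⟶ Y⟦a⟧, f = 0)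
    (f : X⟦m⟧ ⟶ Y⟦b⟧) : f = 0 := by
  obtain ⟨g, hg⟩ := (shiftFunctor T m).map_surjective
    (f ≫ (shiftFunctorAdd' T a m b h).hom.app Y)
  rw [← cancel_mono ((shiftFunctorAdd' T a m b h).hom.app Y), ← hg, hXY g,
    Functor.map_zero, zero_comp]

variable [HasZeroObject T] [Pretriangulated T]

instance (X : T) : (positiveOrthogonal X).IsTriangulatedClosed₂ :=
  .mk' fun S hS h₁ h₃ i hi f ↦ by
    obtain ⟨g, rfl⟩ := Triangle.coyoneda_exact₂ _ (Triangle.shift_distinguished S hS i) f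
      (h₃ i hi _)
    exact (congrArg (· ≫ _) (h₁ i hi g)).trans zero_comp

instance (W : T) : (heart W).IsTriangulatedClosed₂ :=
  inferInstanceAs (ObjectProperty.leftOrthogonal _).IsTriangulatedClosed₂

instance (P : ObjectProperty T) [P.IsTriangulatedClosed₂] [P.IsClosedUnderIsomorphisms] (n : ℤ) :
    (P.shift n).IsTriangulatedClosed₂ :=
  .mk' fun S hS h₁ h₃ ↦
    P.ext_of_isTriangulatedClosed₂ _ (Triangle.shift_distinguished S hS n) h₁ h₃

lemma prop_obj₃_of_isStableUnderShiftBy (U : ObjectProperty T) [U.IsTriangulatedClosed₂]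
    [U.IsClosedUnderIsomorphisms] [U.IsStableUnderShiftBy (1 : ℤ)] {S : Triangle T}
    (hS : S ∈ distTriang T) (h₁ : U S.obj₁) (h₂ : U S.obj₂) : U S.obj₃ :=
  U.ext_of_isTriangulatedClosed₂ _ (rot_of_distTriang _ hS) h₂ (U.le_shift (1 : ℤ) _ h₁)

lemma heart_obj₃ {W : T} {S : Triangle T} (hS : S ∈ distTriang T) (h₁ : heart W S.obj₁)
    (h₂ : heart W S.obj₂) (h : ∀ f : S.obj₁ ⟶ W, ∃ g, S.mor₁ ≫ g = f) : heart W S.obj₃ := by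
  refine heart_iff.2 fun i hi f ↦ ?_
  obtain ⟨g, rfl⟩ := Triangle.yoneda_exact₃ S hS f (heart_iff.1 h₂ i hi _)
  obtain rfl | hi₁ := eq_or_ne i 1
  · obtain ⟨g, rfl⟩ := (shiftFunctor T (1 : ℤ)).map_surjective g
    obtain ⟨g, rfl⟩ := h g
    rw [Functor.map_comp, comp_distTriang_mor_zero₃₁_assoc S hS, zero_comp]
  · rw [shift_hom_eq_zero (sub_add_cancel i 1) (heart_iff.1 h₁ _ (sub_ne_zero.2 hi₁)) g, comp_zero]

end Orthogonals

section Coresolving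

variable {T : Type u} [Category.{v} T] [Preadditive T] [HasZeroObject T] [HasShift T ℤ]
  [∀ n : ℤ, (shiftFunctor T n).Additive] [Pretriangulated T]

/-- `P` cogenerates `G`: every object of `G` is the first vertex of a distinguished triangle
`X ⟶ W ⟶ Z ⟶ X⟦1⟧` with `W` in `P` and `Z` in `G`. If `G` is the heart of a t-structure, these
triangles are the short exact sequences of `G`. -/
def Cogenerates (P G : ObjectProperty T) : Prop :=
  ∀ X, G X → ∃ (W Z : T) (f : X ⟶ W) (g : W ⟶ Z) (h : Z ⟶ X⟦(1 : ℤ)⟧),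
    Triangle.mk f g h ∈ distTriang T ∧ P W ∧ G Z

/-- `P` is a coresolving subcategory of `G`, where the distinguished triangles with vertices in `G`
play the role of short exact sequences. -/
structure IsCoresolving (P G : ObjectProperty T) : Prop where
  le : P ≤ G
  isStableUnderRetracts : P.IsStableUnderRetracts
  isTriangulatedClosed₂ : P.IsTriangulatedClosed₂
  obj₃ {S : Triangle T} : S ∈ distTriang T → P S.obj₁ → P S.obj₂ → G S.obj₃ → P S.obj₃
  cogenerates : Cogenerates P G

lemma isCoresolving_inf (G U : ObjectProperty T) [G.IsStableUnderRetracts]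
    [G.IsTriangulatedClosed₂] [U.IsStableUnderRetracts] [U.IsTriangulatedClosed₂]
    [U.IsStableUnderShiftBy (1 : ℤ)] (h : Cogenerates (G ⊓ U) G) : IsCoresolving (G ⊓ U) G where
  le := inf_le_left
  isStableUnderRetracts := inferInstance
  isTriangulatedClosed₂ := inferInstance
  obj₃ hS h₁ h₂ h₃ := ⟨h₃, prop_obj₃_of_isStableUnderShiftBy U hS h₁.2 h₂.2⟩
  cogenerates := h

/-- The objects `X` of `G` that are injective relative to the short exact sequences of `G`,
that is, such that `Hom(Z, X⟦1⟧) = 0` for all `Z` in `G`. -/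
def relativeInjectives (G : ObjectProperty T) : ObjectProperty T :=
  G ⊓ G.rightOrthogonal.shift (1 : ℤ)

instance (G : ObjectProperty T) [G.IsStableUnderRetracts] :
    (relativeInjectives G).IsStableUnderRetracts :=
  inferInstanceAs (G ⊓ G.rightOrthogonal.shift _).IsStableUnderRetracts

lemma nonempty_retract_obj₁_of_mor₃_eq_zero {S : Triangle T} (hS : S ∈ distTriang T)
    (h : S.mor₃ = 0) : Nonempty (Retract S.obj₁ S.obj₂) :=
  have := Triangle.mono₁ S hS h
  have := isSplitMono_of_mono S.mor₁
  ⟨⟨S.mor₁, retraction S.mor₁, IsSplitMono.id _⟩⟩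

lemma nonempty_retract_obj₃_of_mor₃_eq_zero {S : Triangle T} (hS : S ∈ distTriang T)
    (h : S.mor₃ = 0) : Nonempty (Retract S.obj₃ S.obj₂) :=
  have := Triangle.epi₂ S hS h
  have := isSplitEpi_of_epi S.mor₂
  ⟨⟨section_ S.mor₂, S.mor₂, IsSplitEpi.id _⟩⟩

lemma isCoresolving_relativeInjectives (G : ObjectProperty T) [G.IsStableUnderRetracts]
    [G.IsTriangulatedClosed₂] (h : Cogenerates (relativeInjectives G) G) :
    IsCoresolving (relativeInjectives G) G where
  le := inf_le_left
  isStableUnderRetracts := inferInstance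
  isTriangulatedClosed₂ := inferInstanceAs (G ⊓ G.rightOrthogonal.shift _).IsTriangulatedClosed₂
  obj₃ hS h₁ h₂ h₃ := by
    obtain ⟨r⟩ := nonempty_retract_obj₃_of_mor₃_eq_zero hS (h₁.2 _ h₃)
    exact (relativeInjectives G).prop_of_retract r h₂
  cogenerates := h

end Coresolving

section TStructures

open Triangulated

variable {T : Type u} [Category.{v} T] [Preadditive T] [HasZeroObject T] [HasShift T ℤ]
  [∀ n : ℤ, (shiftFunctor T n).Additive] [Pretriangulated T] (t : TStructure T) (n : ℤ)

instance : (t.le n).IsStableUnderRetracts where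
  of_retract {X Y} r hY := by
    have : t.IsLE Y n := ⟨hY⟩
    refine ((t.isLE_iff_orthogonal n (n + 1) rfl X).2 fun Z f _ ↦ ?_).le
    rw [← id_comp f, ← r.retract, assoc, t.zero (r.r ≫ f) n (n + 1) (by lia), comp_zero]

instance : (t.le n).IsTriangulatedClosed₂ :=
  .mk' fun S hS h₁ h₃ ↦ (t.isLE₂ S hS n ⟨h₁⟩ ⟨h₃⟩).le

instance : (t.le n).IsStableUnderShiftBy (1 : ℤ) where
  le_shift X hX :=
    have : t.IsLE X n := ⟨hX⟩
    have : t.IsLE (X⟦(1 : ℤ)⟧) (n - 1) := t.isLE_shift X n 1 (n - 1) (by lia)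
    (t.isLE_of_le (X⟦(1 : ℤ)⟧) (n - 1) n (by lia)).le

end TStructures

section Resolutions

variable {A : Type u} [Category.{v} A] [Abelian A]

lemma shortExact_cokernelDesc {S : ShortComplex A} (hS : S.Exact) :
    (ShortComplex.mk (cokernel.desc S.f S.g S.zero) (cokernel.π S.g)
      (by simp [← cancel_epi (cokernel.π S.f)])).ShortExact where
  exact := by
    let φ : ShortComplex.mk S.g (cokernel.π S.g) (cokernel.condition _) ⟶
        ShortComplex.mk (cokernel.desc S.f S.g S.zero) (cokernel.π S.g)
          (by simp [← cancel_epi (cokernel.π S.f)]) :=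
      { τ₁ := cokernel.π S.f, τ₂ := 𝟙 _, τ₃ := 𝟙 _ }
    exact (ShortComplex.exact_iff_of_epi_of_isIso_of_mono φ).1 (ShortComplex.exact_cokernel S.g)
  mono_f := hS.mono_cokernelDesc
  epi_g := inferInstanceAs (Epi (cokernel.π S.g))

variable {P : ObjectProperty A} [P.IsClosedUnderIsomorphisms]
  (hP : ∀ ⦃S : ShortComplex A⦄, S.ShortExact → P S.X₁ → P S.X₂ → P S.X₃)
include hP

lemma prop_cokernel_of_exact {n : ℕ} {S : ComposableArrows A (n + 1)} (hS : S.Exact)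
    (h₀ : IsZero (S.obj 0)) (k : ℕ) (hk : k ≤ n)
    (h : ∀ i (_ : 1 ≤ i) (_ : i ≤ k + 1), P (S.obj ⟨i, by lia⟩)) :
    P (cokernel (S.map' k (k + 1))) := by
  induction k with
  | zero =>
    have map_eq_zero : S.map' 0 1 = 0 := h₀.eq_of_src _ _
    exact P.prop_of_iso ((cokernelIsoOfEq map_eq_zero).trans cokernelZeroIsoTarget).symm
      (h 1 le_rfl le_rfl)
  | succ k ih =>
    exact hP (shortExact_cokernelDesc (hS.exact' k (k + 1) (k + 2)))
      (ih (by lia) fun i hi hi' ↦ h i hi (by lia)) (h (k + 2) (by lia) le_rfl)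

lemma prop_of_exact {r : ℕ} {S : ComposableArrows A (r + 3)} (hS : S.Exact)
    (h₀ : IsZero (S.obj 0)) (h_last : IsZero (S.obj (Fin.last (r + 3))))
    (h : ∀ i (_ : 1 ≤ i) (_ : i ≤ r + 1), P (S.obj ⟨i, by lia⟩)) :
    P (S.obj ⟨r + 2, by lia⟩) := by
  have exact_r := hS.exact' r (r + 1) (r + 2)
  have : Epi (S.map' (r + 1) (r + 2)) :=
    (hS.exact' (r + 1) (r + 2) (r + 3)).epi_f (h_last.eq_of_tgt _ _)
  exact P.prop_of_iso ((cokernelIsCokernel _).coconePointUniqueUpToIso exact_r.gIsCokernel)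
    (prop_cokernel_of_exact hP hS h₀ r (by lia) h)

end Resolutions

section Coaisle

variable {A : Type u} [Category.{v} A] [Abelian A] [HasDerivedCategory.{w} A]

lemma homologyMap_eq_zero_of_Q_map_eq_zero {K L : CochainComplex A ℤ} {φ : K ⟶ L}
    (hφ : Q.map φ = 0) (n : ℤ) : HomologicalComplex.homologyMap φ n = 0 := by
  have naturality := (homologyFunctorFactors A n).hom.naturality φ
  rw [Functor.comp_map, hφ, Functor.map_zero, zero_comp] at naturality
  exact (cancel_epi ((homologyFunctorFactors A n).hom.app K)).1
    (naturality.symm.trans comp_zero.symm)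

lemma homologyι_comp_eq_zero {K : CochainComplex A ℤ} {n : ℤ} {E : A} {b : K.opcycles n ⟶ E}
    (h : ∀ φ : K ⟶ (HomologicalComplex.single A (.up ℤ) n).obj E, Q.map φ = 0) :
    K.homologyι n ≫ b = 0 := by
  let φ : K ⟶ (HomologicalComplex.single A (.up ℤ) n).obj E :=
    HomologicalComplex.mkHomToSingle (K.pOpcycles n ≫ b) fun i _ ↦ by simp
  have hb : HomologicalComplex.opcyclesMap φ n ≫
      (HomologicalComplex.singleObjOpcyclesSelfIso (.up ℤ) n E).inv = b := by
    simp [← cancel_epi (K.pOpcycles n), φ]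
  rw [← hb, ← HomologicalComplex.homologyι_naturality_assoc,
    homologyMap_eq_zero_of_Q_map_eq_zero (h φ) n, zero_comp]

/-- Morphisms from the cohomology of `X` in a negative degree `n` to the injective object `E` extend
to morphisms `X ⟶ Σ ^ (-n) E`. -/
lemma isGE_zero_of_positiveOrthogonal {E : A} [Injective E] (hE : IsCoseparator E)
    {X : DerivedCategory A} (hX : positiveOrthogonal X ((singleFunctor A 0).obj E)) :
    X.IsGE 0 := by
  let K := Q.objPreimage X
  let e : Q.obj K ≅ X := Q.objObjPreimageIso X
  refine (isGE_iff X 0).2 fun n hn ↦ IsZero.of_iso (Y := K.homology n) ?_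
    ((homologyFunctor A n).mapIso e.symm ≪≫ (homologyFunctorFactors A n).app K)
  refine (IsZero.iff_id_eq_zero _).2 ((isCoseparator_def E).1 hE _ _ fun a ↦ ?_)
  have Q_map_eq_zero (φ : K ⟶ (HomologicalComplex.single A (.up ℤ) n).obj E) : Q.map φ = 0 := by
    let eE : ((singleFunctor A 0).obj E)⟦-n⟧ ≅
        Q.obj ((HomologicalComplex.single A (.up ℤ) n).obj E) :=
      ((singleFunctors A).shiftIso (-n) n 0 (by lia)).app E
    have h : e.inv ≫ Q.map φ ≫ eE.inv = 0 := hX (-n) (by lia) _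
    rw [← cancel_epi e.inv, ← cancel_mono eE.inv, assoc, h, comp_zero, zero_comp]
  rw [id_comp, zero_comp, ← Injective.comp_factorThru a (K.homologyι n)]
  exact homologyι_comp_eq_zero Q_map_eq_zero

end Coaisle

section CotiltingClass

variable {A : Type u} [Category.{v} A] [Abelian A]

/-- The cotilting class `X_C`: the objects `M` such that `Ext^i(M, C) = 0` for all `i > 0`. -/
def cotiltingClass [HasExt.{e} A] (C : A) : ObjectProperty A :=
  fun M ↦ ∀ i : ℕ, 0 < i → Subsingleton (Abelian.Ext M C i)

/-- `Prod C`: the direct summands of products of copies of `C`. -/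
def prodClass [HasProducts.{v} A] (C : A) : ObjectProperty A :=
  fun M ↦ ∃ ι : Type v, Nonempty (Retract M (∏ᶜ fun _ : ι ↦ C))

variable [HasDerivedCategory.{w} A]

lemma heart_singleFunctor_obj_iff [HasExt.{e} A] {C M : A} :
    heart ((singleFunctor A 0).obj C) ((singleFunctor A 0).obj M) ↔ cotiltingClass C M := by
  let homEquiv (n : ℕ) : Abelian.Ext M C n ≃
      ((singleFunctor A 0).obj M ⟶ ((singleFunctor A 0).obj C)⟦(n : ℤ)⟧) := Abelian.Ext.homEquiv
  rw [heart_iff]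
  constructor
  · intro h n hn
    have : Subsingleton ((singleFunctor A 0).obj M ⟶ ((singleFunctor A 0).obj C)⟦(n : ℤ)⟧) :=
      subsingleton_of_forall_eq 0 (h n (by lia))
    exact (homEquiv n).subsingleton
  · intro h i hi f
    obtain hi_neg | hi_pos := lt_or_gt_of_ne hi
    · have : (((singleFunctor A 0).obj C)⟦i⟧).IsGE (-i) := TStructure.t.isGE_shift _ 0 i (-i)
      exact TStructure.t.zero f 0 (-i) (by lia)
    · lift i to ℕ using hi_pos.le
      have := h i (by lia)
      exact (homEquiv i).symm.subsingleton.elim f 0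

variable [HasProducts.{v} A] [AB4StarOfSize.{v} A] [EnoughInjectives A]

lemma positiveOrthogonal_of_prodClass {C M : A} (hM : prodClass C M) {X : DerivedCategory A}
    (hX : positiveOrthogonal X ((singleFunctor A 0).obj C)) :
    positiveOrthogonal X ((singleFunctor A 0).obj M) := by
  obtain ⟨ι, ⟨r⟩⟩ := hM
  have power := positiveOrthogonal_of_isLimit_fan (isLimitFanMkObjOfIsLimit (singleFunctor A 0) _ _
    (productIsProduct fun _ : ι ↦ C)) fun _ ↦ hX
  exact (positiveOrthogonal X).prop_of_retract (r.map (singleFunctor A 0)) power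

end CotiltingClass

section Cotilting

variable {A : Type u} [Category.{v} A] [Abelian A] [HasProducts.{v} A] [HasExt.{e} A]

/-- Big cotilting objects, without the bound on their injective dimension: the powers of `C` lie in
`X_C`, and some injective cogenerator has a finite resolution by objects of `Prod C`. The resolution
is encoded as an exact sequence `0 → S₁ → ⋯ → Sᵣ₊₁ → Sᵣ₊₂ → 0` in which `Sᵣ₊₂` is the injective
cogenerator. -/
structure IsCotilting (C : A) : Prop where
  cotiltingClass_power (ι : Type v) : cotiltingClass C (∏ᶜ fun _ : ι ↦ C)
  exists_resolution : ∃ (r : ℕ) (S : ComposableArrows A (r + 3)), S.Exact ∧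
    IsZero (S.obj 0) ∧ IsZero (S.obj (Fin.last (r + 3))) ∧
    (∀ i (_ : 1 ≤ i) (_ : i ≤ r + 1), prodClass C (S.obj ⟨i, by lia⟩)) ∧
    Injective (S.obj ⟨r + 2, by lia⟩) ∧ IsCoseparator (S.obj ⟨r + 2, by lia⟩)

namespace IsCotilting

variable [HasDerivedCategory.{w} A] {C : A} (hC : IsCotilting C)
include hC

lemma heart_power (ι : Type v) :
    heart ((singleFunctor A 0).obj C) ((singleFunctor A 0).obj (∏ᶜ fun _ : ι ↦ C)) :=
  heart_singleFunctor_obj_iff.2 (hC.cotiltingClass_power ι)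

variable [AB4StarOfSize.{v} A] [EnoughInjectives A]

lemma isGE_zero_of_heart {X : DerivedCategory A} (hX : heart ((singleFunctor A 0).obj C) X) :
    X.IsGE 0 := by
  obtain ⟨r, S, hS, h₀, h_last, hprod, _, hE⟩ := hC.exists_resolution
  refine isGE_zero_of_positiveOrthogonal hE (prop_of_exact
    (P := (positiveOrthogonal X).inverseImage (singleFunctor A 0)) ?_ hS h₀ h_last fun i hi hi' ↦
      positiveOrthogonal_of_prodClass (hprod i hi hi') hX.positiveOrthogonal)
  exact fun S hS h₁ h₂ ↦
    prop_obj₃_of_isStableUnderShiftBy _ hS.singleTriangle_distinguished h₁ h₂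

lemma exists_iso_singleFunctor_obj {X : DerivedCategory A}
    (hX : heart ((singleFunctor A 0).obj C) X) (hX' : TStructure.t.le 0 X) :
    ∃ M : A, Nonempty (X ≅ (singleFunctor A 0).obj M) :=
  have := hC.isGE_zero_of_heart hX
  have : X.IsLE 0 := ⟨hX'⟩
  exists_iso_singleFunctor_obj_of_isGE_of_isLE X 0

lemma exists_distTriang_power {X : DerivedCategory A}
    (hX : heart ((singleFunctor A 0).obj C) X) :
    ∃ (ι : Type v) (Z : DerivedCategory A) (f : X ⟶ (singleFunctor A 0).obj (∏ᶜ fun _ : ι ↦ C))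
      (g : _ ⟶ Z) (h : Z ⟶ X⟦(1 : ℤ)⟧), Triangle.mk f g h ∈ distTriang (DerivedCategory A) ∧
        heart ((singleFunctor A 0).obj C) Z := by
  obtain ⟨ι, φ, hφ⟩ := exists_hom_power_factorsThru (singleFunctor A 0) C X
  obtain ⟨Z, g, h, hT⟩ := distinguished_cocone_triangle φ
  exact ⟨ι, Z, φ, g, h, hT, heart_obj₃ hT hX (hC.heart_power ι) hφ⟩

lemma cogenerates_heart {P : ObjectProperty (DerivedCategory A)}
    (hP : ∀ ι : Type v, P ((singleFunctor A 0).obj (∏ᶜ fun _ : ι ↦ C))) :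
    Cogenerates P (heart ((singleFunctor A 0).obj C)) := fun _ hX ↦
  have ⟨ι, Z, f, g, h, hT, hZ⟩ := hC.exists_distTriang_power hX
  ⟨_, Z, f, g, h, hT, hP ι, hZ⟩

lemma map_cotiltingClass_eq :
    (cotiltingClass C).map (singleFunctor A 0) =
      heart ((singleFunctor A 0).obj C) ⊓ TStructure.t.le 0 := by
  refine le_antisymm ?_ fun X hX ↦ ?_
  · rintro X ⟨M, hM, ⟨e⟩⟩
    exact ObjectProperty.prop_of_iso _ e
      ⟨heart_singleFunctor_obj_iff.2 hM, TStructure.t.le_of_isLE _ 0⟩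
  · obtain ⟨M, ⟨e⟩⟩ := hC.exists_iso_singleFunctor_obj hX.1 hX.2
    exact ⟨M, heart_singleFunctor_obj_iff.1 (ObjectProperty.prop_of_iso _ e hX.1), ⟨e.symm⟩⟩

lemma relativeInjectives_singleFunctor_obj {M : A} (hM : prodClass C M) :
    relativeInjectives (heart ((singleFunctor A 0).obj C)) ((singleFunctor A 0).obj M) := by
  refine ⟨?_, fun Z f hZ ↦
    positiveOrthogonal_of_prodClass hM hZ.positiveOrthogonal 1 one_pos f⟩
  obtain ⟨ι, ⟨r⟩⟩ := hM
  exact (heart _).prop_of_retract (r.map (singleFunctor A 0)) (hC.heart_power ι)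

lemma map_prodClass_eq :
    (prodClass C).map (singleFunctor A 0) =
      relativeInjectives (heart ((singleFunctor A 0).obj C)) := by
  refine le_antisymm ?_ fun X hX ↦ ?_
  · rintro X ⟨M, hM, ⟨e⟩⟩
    exact ObjectProperty.prop_of_iso _ e (hC.relativeInjectives_singleFunctor_obj hM)
  · obtain ⟨ι, Z, f, g, h, hT, hZ⟩ := hC.exists_distTriang_power hX.1
    let W := (singleFunctor A 0).obj (∏ᶜ fun _ : ι ↦ C)
    have ⟨(r : Retract X W)⟩ := nonempty_retract_obj₁_of_mor₃_eq_zero hT (hX.2 h hZ)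
    obtain ⟨M, ⟨e⟩⟩ := hC.exists_iso_singleFunctor_obj hX.1
      (ObjectProperty.prop_of_retract _ r (TStructure.t.le_of_isLE W 0))
    let r' : Retract ((singleFunctor A 0).obj M) W := (Retract.ofIso e.symm).trans r
    have preimage_comp : (singleFunctor A 0).preimage r'.i ≫ (singleFunctor A 0).preimage r'.r =
        𝟙 M := (singleFunctor A 0).map_injective (by simp)
    exact ⟨M, ⟨ι, ⟨⟨_, _, preimage_comp⟩⟩⟩, ⟨e.symm⟩⟩

theorem isCoresolving_map_cotiltingClass :
    IsCoresolving ((cotiltingClass C).map (singleFunctor A 0))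
      (heart ((singleFunctor A 0).obj C)) := by
  rw [hC.map_cotiltingClass_eq]
  exact isCoresolving_inf _ _
    (hC.cogenerates_heart fun ι ↦ ⟨hC.heart_power ι, TStructure.t.le_of_isLE _ 0⟩)

theorem isCoresolving_map_prodClass :
    IsCoresolving ((prodClass C).map (singleFunctor A 0))
      (heart ((singleFunctor A 0).obj C)) := by
  rw [hC.map_prodClass_eq]
  exact isCoresolving_relativeInjectives _ (hC.cogenerates_heart fun ι ↦
    hC.relativeInjectives_singleFunctor_obj ⟨ι, ⟨.refl _⟩⟩)

end IsCotilting

end Cotilting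

lemma objectProperty_map_eq {A : Type u} [Category.{v} A] {D : Type*} [Category D] (F : A ⥤ D)
    (P : ObjectProperty A) : P.map F = fun Y ↦ ∃ X, P X ∧ Nonempty (Y ≅ F.obj X) :=
  funext fun _ ↦ propext (exists_congr fun _ ↦ and_congr_right' (Iso.nonempty_iso_symm _ _))

section Modules

variable {R : Type v} [Ring R] {C : ModuleCat.{v} R}

lemma prodClass_eq_inProdOf : prodClass C = InProdOf C :=
  funext fun _ ↦ propext
    ⟨fun ⟨ι, ⟨r⟩⟩ ↦ ⟨ι, r.i, r.r, r.retract⟩, fun ⟨ι, s, r, h⟩ ↦ ⟨ι, ⟨⟨s, r, h⟩⟩⟩⟩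

lemma isCotilting_of_isBigCotilting [HasExt.{e} (ModuleCat.{v} R)] (hC : IsBigCotilting C) :
    IsCotilting C := by
  obtain ⟨_, -, hpow, h⟩ := hC
  rw [← prodClass_eq_inProdOf] at h
  exact ⟨hpow, h⟩

lemma IsCoresolving.isCoresolvingInHeart [HasDerivedCategory.{w} (ModuleCat.{v} R)]
    {P : ObjectProperty (DerivedCategory (ModuleCat.{v} R))}
    (h : IsCoresolving P (heart ((singleFunctor (ModuleCat.{v} R) 0).obj C))) :
    IsCoresolvingInHeart C P := by
  have heart_eq : heart ((singleFunctor (ModuleCat.{v} R) 0).obj C) = InHeart C :=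
    funext fun _ ↦ propext heart_iff
  rw [heart_eq] at h
  have := h.isStableUnderRetracts
  have := h.isTriangulatedClosed₂
  exact ⟨h.le, fun X Y ⟨s, r, hsr⟩ ↦ ObjectProperty.prop_of_retract P ⟨s, r, hsr⟩,
    fun T hT ↦ ObjectProperty.ext_of_isTriangulatedClosed₂ P T hT, fun T hT ↦ h.obj₃ hT,
    h.cogenerates⟩

end Modules

end Cotilting

open Cotilting in
theorem statement15_general {A : Type u} [Category.{v} A] [Abelian A] [HasProducts.{v} A]
    [AB4StarOfSize.{v} A] [EnoughInjectives A] [HasExt.{e} A] [HasDerivedCategory.{w} A]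
    {C : A} (hC : IsCotilting C) :
    IsCoresolving ((cotiltingClass C).map (singleFunctor A 0))
      (heart ((singleFunctor A 0).obj C)) ∧
    IsCoresolving ((prodClass C).map (singleFunctor A 0))
      (heart ((singleFunctor A 0).obj C)) :=
  ⟨hC.isCoresolving_map_cotiltingClass, hC.isCoresolving_map_prodClass⟩

theorem statement15 (R : Type v) [Ring R] [HasExt.{e} (ModuleCat.{v} R)]
    [HasDerivedCategory.{w} (ModuleCat.{v} R)]
    (C : ModuleCat.{v} R) (hC : IsBigCotilting C) :
    IsCoresolvingInHeart C (fun X => ∃ M : ModuleCat.{v} R, InCotiltingClass C M ∧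
      Nonempty (X ≅ (singleFunctor (ModuleCat.{v} R) 0).obj M)) ∧
    IsCoresolvingInHeart C (fun X => ∃ M : ModuleCat.{v} R, InProdOf C M ∧
      Nonempty (X ≅ (singleFunctor (ModuleCat.{v} R) 0).obj M)) := by
  have ⟨hX, hProd⟩ := statement15_general (Cotilting.isCotilting_of_isBigCotilting hC)
  rw [Cotilting.objectProperty_map_eq] at hX hProd
  rw [Cotilting.prodClass_eq_inProdOf] at hProd
  exact ⟨hX.isCoresolvingInHeart, hProd.isCoresolvingInHeart⟩
end

section
/- Let R be a ring, C a big cotilting right R-module of injective dimension n, and G = {X ∈ D(R) : Hom_{D(R)}(X, Σ^i C) = 0 for all i ≠ 0} the tilted abelian category. Then for every X ∈ G, considered as a complex of R-modules, the cohomology modules satisfy H^i(X) = 0 for all i < 0 and all i > n. -/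
/-!
Statement 16: Let `R` be a ring, `C` a big cotilting module of injective dimension `n`, and
`G ⊆ D(R)` the heart of the cotilting t-structure.  Then for every `X ∈ G` the cohomology
modules satisfy `H^i(X) = 0` for `i < 0` and `i > n`.
-/

universe e w v u

open CategoryTheory Category Limits

open PaperStmt DerivedCategory

/-!
An injective coseparator `I` detects cohomology: `Hⁱ(X) = 0` as soon as `Hom(X, I[-i]) = 0`,
because every morphism `Hⁱ(X) ⟶ I` is induced by a morphism `X ⟶ I[-i]`. A finite resolution
`0 ⟶ Cᵣ ⟶ ⋯ ⟶ C₀ ⟶ I ⟶ 0` by objects of `Prod C` gives access to these groups by dimension shifting.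

* For `i < 0`, the groups `Hom(X, Cₖ[k - i])` vanish for all `k`, hence so does `Hom(X, I[-i])`.
* For `i > n`, since `Hom(X, Cₖ[k - i]) = 0` for `k < i`, a morphism `X ⟶ I[-i]` is detected by its
  composition with the iterated connecting morphism `I ⟶ N[i]`, where `N` is the `i`-th syzygy
  of `I`. This connecting morphism is itself zero: `N` is finitely resolved by `Prod C`, and
  `Extᵏ(I, C) = 0` for `k > n`.

Passing from `C` to `Prod C` requires that termwise products of complexes detect zero morphisms in
the derived category. A morphism of complexes that becomes zero there factors through an acyclic
complex, and products of acyclic complexes are acyclic.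
-/

universe w'

open scoped ZeroObject

namespace BigCotilting

variable {A : Type u} [Category.{v} A] [Abelian A]

section ExactLimits

variable {J : Type*} [Category* J]

lemma shortComplex_exact_of_evaluation {S : ShortComplex (J ⥤ A)}
    (hS : ∀ j, (S.map ((evaluation J A).obj j)).Exact) : S.Exact := by
  rw [S.exact_iff_isZero_homology, Functor.isZero_iff]
  exact fun j => ((S.map _).exact_iff_isZero_homology.1 (hS j)).of_iso
    (S.mapHomologyIso ((evaluation J A).obj j)).symm

variable [HasLimitsOfShape J A] [HasExactLimitsOfShape J A]

lemma shortComplex_exact_of_isLimit {F : J ⥤ ShortComplex A} {c : Cone F} (hc : IsLimit c)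
    (hF : ∀ j, (F.obj j).Exact) : c.pt.Exact := by
  have hS : ((ShortComplex.FunctorEquivalence.inverse J A).obj F).Exact :=
    shortComplex_exact_of_evaluation fun j =>
      (ShortComplex.exact_iff_of_iso
        (((ShortComplex.functorEquivalence J A).counitIso.app F).app j)).2 (hF j)
  exact (ShortComplex.exact_iff_of_iso
    (hc.conePointUniqueUpToIso (ShortComplex.isLimitLimitCone F))).2 (hS.map lim)

lemma acyclic_of_isLimit {ι : Type*} {cs : ComplexShape ι} {F : J ⥤ HomologicalComplex A cs}
    {c : Cone F} (hc : IsLimit c) (hF : ∀ j, (F.obj j).Acyclic) : c.pt.Acyclic := by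
  intro i
  refine shortComplex_exact_of_isLimit
    (c := (HomologicalComplex.shortComplexFunctor A cs i).mapCone c) ?_ fun j => hF j i
  exact ShortComplex.isLimitOfIsLimitπ _
    (isLimitOfPreserves (HomologicalComplex.eval A cs _) hc)
    (isLimitOfPreserves (HomologicalComplex.eval A cs _) hc)
    (isLimitOfPreserves (HomologicalComplex.eval A cs _) hc)

end ExactLimits

lemma exists_homologyMap_single_eq {ι : Type*} [DecidableEq ι] {c : ComplexShape ι}
    {K : HomologicalComplex A c} {i : ι} {I : A} [Injective I] (φ : K.homology i ⟶ I) :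
    ∃ g : K ⟶ (HomologicalComplex.single A c i).obj I,
      HomologicalComplex.homologyMap g i ≫
        (HomologicalComplex.singleObjHomologySelfIso c i I).hom = φ := by
  let ψ : K.opcycles i ⟶ I := Injective.factorThru φ (K.homologyι i)
  let g : K ⟶ (HomologicalComplex.single A c i).obj I :=
    HomologicalComplex.mkHomToSingle (K.pOpcycles i ≫ ψ) (by simp)
  have hg : HomologicalComplex.opcyclesMap g i ≫
      (HomologicalComplex.singleObjOpcyclesSelfIso c i I).inv = ψ := by
    simp [← cancel_epi (K.pOpcycles i), g]
  refine ⟨g, ?_⟩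
  rw [← HomologicalComplex.homologyι_singleObjOpcyclesSelfIso_inv,
    HomologicalComplex.homologyι_naturality_assoc, hg, Injective.comp_factorThru]

lemma acyclic_mappingCone_of_quasiIso {K L : CochainComplex A ℤ} (s : K ⟶ L)
    (hs : HomotopyCategory.quasiIso A _ ((HomotopyCategory.quotient A (.up ℤ)).map s)) :
    (CochainComplex.mappingCone s).Acyclic := by
  rw [HomotopyCategory.quasiIso_eq_trW_subcategoryAcyclic] at hs
  rw [← HomotopyCategory.quotient_obj_mem_subcategoryAcyclic_iff_acyclic]
  exact (ObjectProperty.trW_iff_of_distinguished _ _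
    (HomotopyCategory.mappingCone_triangleh_distinguished s)).1 hs

lemma shortExact_kernel_of_exact {S : ShortComplex A} (hS : S.Exact) :
    (ShortComplex.mk (kernel.ι S.f) (kernel.lift S.g S.f S.zero)
      (by simp [← cancel_mono (kernel.ι S.g)])).ShortExact where
  exact := ShortComplex.exact_of_f_is_kernel _
    (isKernelOfComp _ _ (kernelIsKernel S.f) _ (kernel.lift_ι _ _ S.zero))
  mono_f := inferInstanceAs (Mono (kernel.ι S.f))
  epi_g := (ShortComplex.exact_iff_epi_kernel_lift _).1 hS

lemma shortExact_cokernel_of_exact {S : ShortComplex A} (hS : S.Exact) :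
    (ShortComplex.mk (cokernel.desc S.f S.g S.zero) (cokernel.π S.g)
      (by simp [← cancel_epi (cokernel.π S.f)])).ShortExact where
  exact := ShortComplex.exact_of_g_is_cokernel _
    (isCokernelOfComp _ _ (cokernelIsCokernel S.g) _ (cokernel.π_desc _ _ S.zero))
  mono_f := (ShortComplex.exact_iff_mono_cokernel_desc _).1 hS
  epi_g := inferInstanceAs (Epi (cokernel.π S.g))

/-- The objects `M` having a finite left resolution `0 ⟶ Pᵣ ⟶ ⋯ ⟶ P₀ ⟶ M ⟶ 0` by objects
satisfying `P`, built by successively adjoining `P₀` to a resolution of the first syzygy. -/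
inductive HasFiniteResolution (P : ObjectProperty A) : ObjectProperty A
  | of_isZero {M : A} (hM : IsZero M) : HasFiniteResolution P M
  | of_shortExact {S : ShortComplex A} (hS : S.ShortExact) (h₁ : HasFiniteResolution P S.X₁)
      (h₂ : P S.X₂) : HasFiniteResolution P S.X₃

section Arrows

variable {n : ℕ} {S : ComposableArrows A (n + 3)} (hS : S.Exact)
include hS

lemma hasFiniteResolution_kernel {P : ObjectProperty A} (h₀ : IsZero (S.obj 0))
    (hP : ∀ (i : ℕ) (_ : 1 ≤ i) (_ : i ≤ n + 1), P (S.obj ⟨i, by lia⟩))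
    (i : ℕ) (hi : i ≤ n + 1) : HasFiniteResolution P (kernel (S.map' (i + 1) (i + 2))) := by
  induction i with
  | zero =>
    have hT := shortExact_kernel_of_exact (hS.exact 0)
    have := hT.epi_g
    exact .of_isZero (h₀.of_epi (kernel.lift (S.map' 1 2) (S.map' 0 1) _))
  | succ i ih =>
    exact .of_shortExact (shortExact_kernel_of_exact (hS.exact (i + 1))) (ih (by lia))
      (hP (i + 1) (by lia) (by lia))

lemma hasFiniteResolution_of_exact {P : ObjectProperty A} (h₀ : IsZero (S.obj 0))
    (hl : IsZero (S.obj (Fin.last (n + 3))))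
    (hP : ∀ (i : ℕ) (_ : 1 ≤ i) (_ : i ≤ n + 1), P (S.obj ⟨i, by lia⟩)) :
    HasFiniteResolution P (S.obj ⟨n + 2, by lia⟩) := by
  have : Epi (S.map' (n + 1) (n + 2)) := (hS.exact (n + 1)).epi_f (hl.eq_of_tgt _ _)
  exact .of_shortExact (S := .mk _ _ (kernel.condition (S.map' (n + 1) (n + 2))))
    { exact := ShortComplex.exact_kernel _ }
    (hasFiniteResolution_kernel hS h₀ hP n (by lia)) (hP (n + 1) (by lia) (by lia))

lemma hasInjectiveDimensionLT_cokernel (hl : IsZero (S.obj (Fin.last (n + 3))))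
    (hI : ∀ (i : ℕ) (_ : 2 ≤ i) (_ : i ≤ n + 2), Injective (S.obj ⟨i, by lia⟩))
    (k i : ℕ) (hik : i + k = n + 1) (hi : 1 ≤ i) :
    HasInjectiveDimensionLT (cokernel (S.map' i (i + 1))) k := by
  induction k generalizing i with
  | zero =>
    obtain rfl : i = n + 1 := by lia
    have := (shortExact_cokernel_of_exact (hS.exact (n + 1))).mono_f
    have h := hl.of_mono (cokernel.desc (S.map' (n + 1) (n + 2)) (S.map' (n + 2) (n + 3)) _)
    exact h.hasInjectiveDimensionLT_zero
  | succ k ih =>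
    have := hI (i + 2) (by lia) (by lia)
    exact (shortExact_cokernel_of_exact (hS.exact i)).hasInjectiveDimensionLT_X₁ _
      (ih (i + 1) (by lia) (by lia))
      (hasInjectiveDimensionLT_of_ge _ 1 _ (by lia))

lemma hasInjectiveDimensionLE_of_exact (h₀ : IsZero (S.obj 0))
    (hl : IsZero (S.obj (Fin.last (n + 3))))
    (hI : ∀ (i : ℕ) (_ : 2 ≤ i) (_ : i ≤ n + 2), Injective (S.obj ⟨i, by lia⟩)) :
    HasInjectiveDimensionLE (S.obj ⟨1, by lia⟩) n := by
  have : Mono (S.map' 1 2) := (hS.exact 0).mono_g (h₀.eq_of_src _ _)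
  have hT : (ShortComplex.mk _ _ (cokernel.condition (S.map' 1 2))).ShortExact :=
    { exact := ShortComplex.exact_cokernel _ }
  have := hI 2 le_rfl (by lia)
  exact hT.hasInjectiveDimensionLT_X₁ _
    (hasInjectiveDimensionLT_cokernel hS hl hI n 1 (add_comm 1 n) le_rfl)
    (hasInjectiveDimensionLT_of_ge _ 1 _ (by lia))

end Arrows

variable [HasDerivedCategory.{w} A]

lemma isZero_Q_obj_of_acyclic {K : CochainComplex A ℤ} (hK : K.Acyclic) : IsZero (Q.obj K) := by
  have : QuasiIso (0 : K ⟶ 0) :=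
    ⟨fun i => (quasiIsoAt_iff_exactAt _ i (hK i)).2
      (HomologicalComplex.acyclic_of_isZero _ (isZero_zero _) i)⟩
  have : IsIso (Q.map (0 : K ⟶ 0)) := (isIso_Q_map_iff_quasiIso _ _).2 this
  exact (Q.map_isZero (isZero_zero _)).of_iso (asIso (Q.map (0 : K ⟶ 0)))

lemma exists_acyclic_factorization {K M : CochainComplex A ℤ} {g : K ⟶ M}
    (hg : Q.map g = 0) :
    ∃ (Z : CochainComplex A ℤ) (u : K ⟶ Z) (v : Z ⟶ M), Z.Acyclic ∧ u ≫ v = g := by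
  have hgh : Qh.map ((HomotopyCategory.quotient A _).map g) = Qh.map 0 := by
    rw [Functor.map_zero]
    exact hg
  obtain ⟨K', s, hs, hsg⟩ := (MorphismProperty.map_eq_iff_precomp Qh
    (HomotopyCategory.quasiIso A (ComplexShape.up ℤ)) _ _).1 hgh
  obtain ⟨K', rfl⟩ := HomotopyCategory.quotient_obj_surjective K'
  obtain ⟨s, rfl⟩ := (HomotopyCategory.quotient A (ComplexShape.up ℤ)).map_surjective s
  rw [comp_zero, ← Functor.map_comp] at hsg
  obtain ⟨α, hα⟩ := CochainComplex.HomComplex.Cochain.equivHomotopy _ _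
    (HomotopyCategory.homotopyOfEq (s ≫ g) 0 (by simpa only [Functor.map_zero] using hsg))
  exact ⟨CochainComplex.mappingCone s, CochainComplex.mappingCone.inr s,
    CochainComplex.mappingCone.desc s α g
      (by simpa only [CochainComplex.HomComplex.Cochain.ofHom_zero, add_zero] using hα.symm),
    acyclic_mappingCone_of_quasiIso s hs, CochainComplex.mappingCone.inr_desc ..⟩

lemma Q_hom_ext_of_isLimit_fan {ι : Type*} [HasLimitsOfShape (Discrete ι) A]
    [HasExactLimitsOfShape (Discrete ι) A] {M : ι → CochainComplex A ℤ} {c : Fan M}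
    (hc : IsLimit c) {W : DerivedCategory A} {f : W ⟶ Q.obj c.pt}
    (hf : ∀ a, f ≫ Q.map (c.proj a) = 0) : f = 0 := by
  obtain ⟨W, ⟨e⟩⟩ : ∃ K, Nonempty (Q.obj K ≅ W) := ⟨_, ⟨Q.objObjPreimageIso W⟩⟩
  rw [← Preadditive.IsIso.comp_left_eq_zero e.hom]
  obtain ⟨K, s, _, g, hg⟩ := right_fac (e.hom ≫ f)
  have hproj (a : ι) : Q.map (g ≫ c.proj a) = 0 := by
    rw [Q.map_comp, ← Preadditive.IsIso.comp_left_eq_zero (inv (Q.map s)), ← assoc, ← hg, assoc,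
      hf, comp_zero]
  choose Z u v hZ huv using fun a => exists_acyclic_factorization (hproj a)
  have hprod : (∏ᶜ Z).Acyclic := acyclic_of_isLimit (limit.isLimit _) fun a => hZ a.as
  have hfac : g = Pi.lift u ≫ Fan.IsLimit.lift hc fun a => Pi.π Z a ≫ v a :=
    Fan.IsLimit.hom_ext hc _ _ fun a => by simp [huv]
  rw [hg, hfac, Q.map_comp, (isZero_Q_obj_of_acyclic hprod).eq_of_tgt (Q.map _) 0, zero_comp,
    comp_zero]

/-- The objects `M` of `A` such that every morphism `W ⟶ M[j]` in the derived category vanishes,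
where `M` is placed in degree `0`. -/
def homVanishing (W : DerivedCategory A) (j : ℤ) : ObjectProperty A :=
  fun M => ∀ f : ShiftedHom W ((singleFunctor A 0).obj M) j, f = 0

instance (W : DerivedCategory A) (j : ℤ) : (homVanishing W j).IsStableUnderRetracts where
  of_retract {M N} h hN f := by
    let r := (h.map (singleFunctor A 0)).map (shiftFunctor (DerivedCategory A) j)
    calc f = (f ≫ r.i) ≫ r.r := by rw [assoc, r.retract]; exact (comp_id f).symm
      _ = 0 := by rw [hN (f ≫ r.i), zero_comp]

lemma homVanishing_iff {W : DerivedCategory A} {i j : ℤ} (hij : j + i = 0) {M : A} :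
    homVanishing W j M ↔ ∀ f : W ⟶ (singleFunctor A i).obj M, f = 0 := by
  let e := ((singleFunctors A).shiftIso j i 0 hij).app M
  exact ⟨fun h f => (Preadditive.IsIso.comp_right_eq_zero f e.inv).1 (h _),
    fun h f => (Preadditive.IsIso.comp_right_eq_zero f e.hom).1 (h _)⟩

lemma homVanishing_pi {W : DerivedCategory A} {j : ℤ} {ι : Type*} [HasLimitsOfShape (Discrete ι) A]
    [HasExactLimitsOfShape (Discrete ι) A] {M : ι → A} (hM : ∀ a, homVanishing W j (M a)) :
    homVanishing W j (∏ᶜ M) := by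
  simp only [homVanishing_iff (add_neg_cancel j)] at hM ⊢
  exact fun f => Q_hom_ext_of_isLimit_fan (isLimitFanMkObjOfIsLimit
    (HomologicalComplex.single A (.up ℤ) (-j)) M (Pi.π M) (productIsProduct M)) fun a => hM a _

lemma isZero_homology_of_homVanishing {I : A} [Injective I] (hI : IsCoseparator I)
    {X : DerivedCategory A} {i : ℤ} (h : homVanishing X (-i) I) :
    IsZero ((homologyFunctor A i).obj X) := by
  obtain ⟨K, ⟨e⟩⟩ : ∃ K, Nonempty (Q.obj K ≅ X) := ⟨_, ⟨Q.objObjPreimageIso X⟩⟩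
  refine .of_iso ?_ ((homologyFunctor A i).mapIso e.symm ≪≫ (homologyFunctorFactors A i).app K)
  have hhom (φ : K.homology i ⟶ I) : φ = 0 := by
    obtain ⟨g, rfl⟩ := exists_homologyMap_single_eq φ
    have hQ : Q.map g = 0 := (Preadditive.IsIso.comp_left_eq_zero e.inv _).1
      ((homVanishing_iff (neg_add_cancel i)).1 h _)
    have hg : HomologicalComplex.homologyMap g i = 0 := by
      have hnat := homologyFunctorFactors_hom_naturality g i
      rw [hQ, Functor.map_zero, zero_comp] at hnat
      exact (cancel_epi ((homologyFunctorFactors A i).hom.app K)).1 (hnat.symm.trans comp_zero.symm)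
    rw [hg, zero_comp]
  exact (IsZero.iff_id_eq_zero _).2
    ((Preadditive.isCoseparator_iff _).1 hI _ fun φ => hhom _)

lemma homVanishing_single_of_injDim {M : A} {n : ℕ} [HasInjectiveDimensionLT M n] (N : A)
    {j : ℤ} (hj : n ≤ j) : homVanishing ((singleFunctor A 0).obj N) j M := by
  let _ := HasExt.standard A
  lift j to ℕ using by lia
  have := HasInjectiveDimensionLT.subsingleton M n j (by lia) N
  exact fun f => Abelian.Ext.homEquiv.symm.injective (Subsingleton.elim _ _)

lemma homVanishing_of_isZero (W : DerivedCategory A) (j : ℤ) {M : A} (hM : IsZero M) :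
    homVanishing W j M :=
  fun f => (Functor.map_isZero _ (Functor.map_isZero _ hM)).eq_of_tgt f 0

open Pretriangulated in
lemma shiftedHom_eq_zero_of_comp_mor₃ {D : Type*} [Category* D] [Preadditive D] [HasZeroObject D]
    [HasShift D ℤ] [∀ n : ℤ, (shiftFunctor D n).Additive] [Pretriangulated D]
    {T : Triangle D} (hT : T ∈ distTriang D) {W : D} {n₀ n₁ : ℤ} (h : 1 + n₀ = n₁)
    (hW : ∀ g : ShiftedHom W T.obj₂ n₀, g = 0) {f : ShiftedHom W T.obj₃ n₀}
    (hf : f.comp (T.mor₃ : ShiftedHom T.obj₃ T.obj₁ (1 : ℤ)) h = 0) : f = 0 := by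
  have hex := (preadditiveCoyoneda.obj (.op W)).homologySequence_exact₃ T hT n₀ n₁ (by lia)
  rw [ShortComplex.ab_exact_iff] at hex
  obtain ⟨g, rfl⟩ := hex f
    ((preadditiveCoyoneda_homologySequenceδ_apply T n₀ n₁ (by lia) f).trans hf)
  rw [show g = 0 from hW g]
  exact map_zero _

lemma eq_zero_of_comp_singleδ {S : ShortComplex A} (hS : S.ShortExact) {W : DerivedCategory A}
    {j k : ℤ} (h : 1 + j = k) (h₂ : homVanishing W j S.X₂)
    {f : ShiftedHom W ((singleFunctor A 0).obj S.X₃) j}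
    (hf : f.comp hS.singleδ h = 0) : f = 0 :=
  shiftedHom_eq_zero_of_comp_mor₃ hS.singleTriangle_distinguished h h₂ hf

namespace HasFiniteResolution

variable {P : ObjectProperty A} {M : A}

lemma homVanishing_of_le (hM : HasFiniteResolution P M) {W : DerivedCategory A} {j : ℤ}
    (hP : ∀ k, j ≤ k → P ≤ homVanishing W k) : homVanishing W j M := by
  induction hM generalizing j with
  | of_isZero hM => exact homVanishing_of_isZero W j hM
  | of_shortExact hS _ h₂ ih =>
    exact fun f => eq_zero_of_comp_singleδ hS rfl (hP j le_rfl _ h₂)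
      (ih (fun k hk => hP k (by lia)) _)

lemma exists_syzygy (hM : HasFiniteResolution P M) {X : DerivedCategory A}
    (hX : ∀ j < 0, P ≤ homVanishing X j) (m : ℕ) :
    ∃ (N : A) (_ : HasFiniteResolution P N)
      (δ : ShiftedHom ((singleFunctor A 0).obj M) ((singleFunctor A 0).obj N) (m : ℤ)),
      ∀ {j : ℤ} (hj : m + j = 0) (f : ShiftedHom X ((singleFunctor A 0).obj M) j),
        f.comp δ hj = 0 → f = 0 := by
  induction m generalizing M with
  | zero =>
    exact ⟨M, hM, .mk₀ _ rfl (𝟙 _), fun {j} hj f hf => by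
      obtain rfl : j = 0 := by simpa using hj
      rwa [ShiftedHom.comp_mk₀_id] at hf⟩
  | succ m ih =>
    cases hM with
    | of_isZero hM => exact ⟨M, .of_isZero hM, 0, fun _ f _ => homVanishing_of_isZero X _ hM f⟩
    | @of_shortExact S hS h₁ h₂ =>
      obtain ⟨N, hN, δ, hδ⟩ := ih h₁
      refine ⟨N, hN, ShiftedHom.comp hS.singleδ δ (Nat.cast_succ m).symm, fun {j} hj f hf => ?_⟩
      refine eq_zero_of_comp_singleδ hS rfl (hX j (by lia) _ h₂) (hδ (by lia) _ ?_)
      rwa [ShiftedHom.comp_assoc _ _ _ _ _ (by lia)]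

lemma homVanishing_neg (hM : HasFiniteResolution P M) {X : DerivedCategory A}
    (hX : ∀ j < 0, P ≤ homVanishing X j) {m : ℕ}
    (hP : ∀ k : ℤ, m ≤ k → P ≤ homVanishing ((singleFunctor A 0).obj M) k) :
    homVanishing X (-m) M := by
  obtain ⟨N, hN, δ, hδ⟩ := hM.exists_syzygy hX m
  exact fun f => hδ (add_neg_cancel _) f (by rw [hN.homVanishing_of_le hP δ, ShiftedHom.comp_zero])

end HasFiniteResolution

/-- The class `Prod C` of direct summands of products of copies of `C`. -/
def retractsOfPowers [HasProducts.{w'} A] (C : A) : ObjectProperty A :=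
  fun M => ∃ ι : Type w', Nonempty (Retract M (∏ᶜ fun _ : ι => C))

lemma retractsOfPowers_le_homVanishing [HasProducts.{w'} A] [AB4StarOfSize.{w'} A] {C : A}
    {W : DerivedCategory A} {j : ℤ} (hC : homVanishing W j C) :
    retractsOfPowers.{v, u, w'} C ≤ homVanishing W j := by
  rintro M ⟨ι, ⟨h⟩⟩
  have := AB4StarOfSize.ofShape (C := A) ι
  exact (homVanishing W j).prop_of_retract h (homVanishing_pi fun _ => hC)

lemma hasInjectiveDimensionLE_of_injDimLE {R : Type v} [Ring R] {C : ModuleCat.{v} R} {n : ℕ}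
    (hC : InjDimLE C n) : HasInjectiveDimensionLE C n := by
  obtain ⟨S, hS, h₀, hl, ⟨e⟩, hI⟩ := hC
  have := hasInjectiveDimensionLE_of_exact hS h₀ hl hI
  exact hasInjectiveDimensionLT_of_iso e _

lemma exists_injective_coseparator_hasFiniteResolution {R : Type v} [Ring R]
    [HasExt.{e} (ModuleCat.{v} R)] {C : ModuleCat.{v} R} (hC : IsBigCotilting C) :
    ∃ I : ModuleCat.{v} R, Injective I ∧ IsCoseparator I ∧
      HasFiniteResolution (retractsOfPowers.{v, v + 1, v} C) I := by
  obtain ⟨_, _, _, r, S, hS, h₀, hl, hP, hinj, hsep⟩ := hC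
  refine ⟨_, hinj, hsep, hasFiniteResolution_of_exact hS h₀ hl fun i h₁ h₂ => ?_⟩
  obtain ⟨ι, s, p, hsp⟩ := hP i h₁ h₂
  exact ⟨ι, ⟨⟨s, p, hsp⟩⟩⟩

end BigCotilting

open BigCotilting

theorem statement16_general {A : Type u} [Category.{v} A] [Abelian A] [HasDerivedCategory.{w} A]
    [HasProducts.{w'} A] [AB4StarOfSize.{w'} A] {C I : A} {n : ℕ} [HasInjectiveDimensionLE C n]
    [Injective I] (hI : IsCoseparator I)
    (hres : HasFiniteResolution (retractsOfPowers.{v, u, w'} C) I)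
    {X : DerivedCategory A} (hX : ∀ j : ℤ, j ≠ 0 → homVanishing X j C) {i : ℤ}
    (hi : i < 0 ∨ n < i) : IsZero ((homologyFunctor A i).obj X) := by
  have hprod {j : ℤ} (hj : j ≠ 0) : retractsOfPowers.{v, u, w'} C ≤ homVanishing X j :=
    retractsOfPowers_le_homVanishing (hX j hj)
  refine isZero_homology_of_homVanishing hI ?_
  obtain hi | hi := hi
  · exact hres.homVanishing_of_le fun k hk => hprod (by lia)
  · lift i to ℕ using by lia
    exact hres.homVanishing_neg (fun j hj => hprod hj.ne) fun k hk =>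
      retractsOfPowers_le_homVanishing (homVanishing_single_of_injDim (n := n + 1) I (by lia))

theorem statement16 (R : Type v) [Ring R] [HasExt.{e} (ModuleCat.{v} R)]
    [HasDerivedCategory.{w} (ModuleCat.{v} R)]
    (C : ModuleCat.{v} R) (n : ℕ) (hC : IsBigCotilting C) (hdim : InjDimLE C n)
    (X : DerivedCategory (ModuleCat.{v} R)) (hX : InHeart C X) :
    ∀ i : ℤ, (i < 0 ∨ (n : ℤ) < i) →
      IsZero ((homologyFunctor (ModuleCat.{v} R) i).obj X) := by
  have := hasInjectiveDimensionLE_of_injDimLE hdim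
  obtain ⟨I, _, hI, hres⟩ := exists_injective_coseparator_hasFiniteResolution hC
  exact fun i hi => statement16_general (n := n) hI hres hX hi
end
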